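/- arXiv:0903.3446 — 8 statements merged into one kernel-verified Lean document; each statement's English description precedes it below -/
import Mathlib

section
/- The following three identities hold: ∫_{∂B₁} Σ_{i,j=1}^N H_{ij}(y)² dσ(y) = (|S^{N−1}|/(2N(N+2))) Σ_{i,j,k,ℓ=1}^N (W_{ikjℓ}+W_{iℓjk})²; ∫_{∂B₁} Σ_{i,j,k=1}^N ((∂_k H_{ij})(y))² dσ(y) = (|S^{N−1}|/N) Σ_{i,j,k,ℓ=1}^N (W_{ikjℓ}+W_{iℓjk})²; and ∫_{∂B₁} Σ_{i,j,k,ℓ=1}^N ((∂_k∂_ℓ H_{ij})(y))² dσ(y) = |S^{N−1}| Σ_{i,j,k,ℓ=1}^N (W_{ikjℓ}+W_{iℓjk})². -/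
open scoped BigOperators
open MeasureTheory

noncomputable section

/-- The partial derivative `∂f/∂y_i` of a function on Euclidean space. -/
def pd (N : ℕ) (i : Fin N) (f : EuclideanSpace ℝ (Fin N) → ℝ) :
    EuclideanSpace ℝ (Fin N) → ℝ :=
  fun y => fderiv ℝ f y (EuclideanSpace.single i 1)

/-- `H_{ij}(y) = Σ_{p,q} W_{ipjq} y_p y_q`. -/
def Hmat (N : ℕ) (W : Fin N → Fin N → Fin N → Fin N → ℝ) (i j : Fin N)
    (y : EuclideanSpace ℝ (Fin N)) : ℝ :=
  ∑ p : Fin N, ∑ q : Fin N, W i p j q * y p * y q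

/-- The surface measure on the unit sphere `S^{N-1} ⊂ ℝ^N`. -/
def sphereMeasure (N : ℕ) :
    Measure (Metric.sphere (0 : EuclideanSpace ℝ (Fin N)) 1) :=
  (volume : Measure (EuclideanSpace ℝ (Fin N))).toSphere

/-- `|S^{N-1}|`, the total surface measure of the unit sphere in `ℝ^N`. -/
def sphereArea (N : ℕ) : ℝ := (sphereMeasure N Set.univ).toReal


open scoped Pointwise in
lemma sphere_preserve (N : ℕ)
    (g : EuclideanSpace ℝ (Fin N) ≃ₗᵢ[ℝ] EuclideanSpace ℝ (Fin N))
    (f : EuclideanSpace ℝ (Fin N) → ℝ) (hf : Continuous f) :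
    ∫ y : Metric.sphere (0 : EuclideanSpace ℝ (Fin N)) 1, f (g y) ∂(sphereMeasure N)
      = ∫ y : Metric.sphere (0 : EuclideanSpace ℝ (Fin N)) 1, f y ∂(sphereMeasure N) := by
  let G : Metric.sphere (0 : EuclideanSpace ℝ (Fin N)) 1 →
      Metric.sphere (0 : EuclideanSpace ℝ (Fin N)) 1 :=
    fun y => ⟨g y, by simp⟩
  have hG : Continuous G := by
    apply Continuous.subtype_mk
    exact g.continuous.comp continuous_subtype_val
  have hmap : Measure.map G (sphereMeasure N) = sphereMeasure N := by
    ext s hs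
    rw [Measure.map_apply hG.measurable hs, sphereMeasure, Measure.toSphere_apply' _ hs,
      Measure.toSphere_apply' _ (hG.measurable hs)]
    congr 1
    have : Set.Ioo (0 : ℝ) 1 • ((↑) '' (G ⁻¹' s) : Set (EuclideanSpace ℝ (Fin N)))
        = g ⁻¹' (Set.Ioo (0 : ℝ) 1 • ((↑) '' s)) := by
      ext z
      simp only [Set.mem_smul, Set.mem_image, Set.mem_preimage]
      constructor
      · rintro ⟨r, hr, _, ⟨y, hy, rfl⟩, rfl⟩
        exact ⟨r, hr, _, ⟨G y, hy, rfl⟩, by simp [G]⟩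
      · rintro ⟨r, hr, _, ⟨y, hy, rfl⟩, h⟩
        have hy1 : g.symm y ∈ Metric.sphere (0 : EuclideanSpace ℝ (Fin N)) 1 := by
          simp
        refine ⟨r, hr, _, ⟨⟨g.symm y, hy1⟩, ?_, rfl⟩, ?_⟩
        · have : G ⟨g.symm y, hy1⟩ = y := by
            apply Subtype.ext
            simp [G]
          rw [this]
          exact hy
        · apply g.injective
          simp [h]
    rw [this]
    exact g.measurePreserving.measure_preimage_emb
      g.toHomeomorph.measurableEmbedding _
  conv_rhs => rw [← hmap]
  exact (integral_map hG.measurable.aemeasurable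
    (hf.comp continuous_subtype_val).aestronglyMeasurable).symm

lemma sphere_integrable (N : ℕ)
    (f : EuclideanSpace ℝ (Fin N) → ℝ) (hf : Continuous f) :
    Integrable (fun y : Metric.sphere (0 : EuclideanSpace ℝ (Fin N)) 1 => f y)
      (sphereMeasure N) := by
  haveI : IsFiniteMeasure (sphereMeasure N) := by unfold sphereMeasure; infer_instance
  exact (hf.comp continuous_subtype_val).integrable_of_hasCompactSupport
    (HasCompactSupport.of_compactSpace _)

lemma sphere_one (N : ℕ) :
    ∫ _y : Metric.sphere (0 : EuclideanSpace ℝ (Fin N)) 1, (1 : ℝ) ∂(sphereMeasure N)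
      = sphereArea N := by
  simp [sphereArea, measureReal_def]

lemma sphere_sum_sq (N : ℕ) (y : Metric.sphere (0 : EuclideanSpace ℝ (Fin N)) 1) :
    ∑ i, (y : EuclideanSpace ℝ (Fin N)) i ^ 2 = 1 := by
  have h := y.2
  simp only [mem_sphere_iff_norm, sub_zero] at h
  rw [← EuclideanSpace.real_norm_sq_eq, h, one_pow]

lemma moment_norm (N p : ℕ) (e v : EuclideanSpace ℝ (Fin N)) (he : ‖e‖ = 1) :
    ∫ y : Metric.sphere (0 : EuclideanSpace ℝ (Fin N)) 1,
        (inner ℝ v (y : EuclideanSpace ℝ (Fin N))) ^ p ∂(sphereMeasure N)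
      = ‖v‖ ^ p * ∫ y : Metric.sphere (0 : EuclideanSpace ℝ (Fin N)) 1,
        (inner ℝ e (y : EuclideanSpace ℝ (Fin N))) ^ p ∂(sphereMeasure N) := by
  have hn : ‖‖v‖ • e‖ = ‖v‖ := by simp [norm_smul, he]
  have hr := Submodule.reflection_sub hn
  rw [← sphere_preserve N (Submodule.reflection (Submodule.span ℝ {‖v‖ • e - v})ᗮ)
    (fun y => (inner ℝ v y) ^ p) (by fun_prop), ← integral_const_mul]
  congr 1
  ext y
  nth_rewrite 1 [← hr]
  rw [LinearIsometryEquiv.inner_map_map, real_inner_smul_left, mul_pow]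

lemma moment_two (N : ℕ) (hN : 0 < N) (b : Fin N → ℝ) :
    ∫ y : Metric.sphere (0 : EuclideanSpace ℝ (Fin N)) 1,
        (∑ l, b l * (y : EuclideanSpace ℝ (Fin N)) l) ^ 2 ∂(sphereMeasure N)
      = sphereArea N / N * ∑ l, b l ^ 2 := by
  have hNR : (N : ℝ) ≠ 0 := by positivity
  set e : EuclideanSpace ℝ (Fin N) := EuclideanSpace.single ⟨0, hN⟩ 1 with he
  have he1 : ‖e‖ = 1 := by simp [he]
  have key := fun v => moment_norm N 2 e v he1
  set c := ∫ y : Metric.sphere (0 : EuclideanSpace ℝ (Fin N)) 1,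
        (inner ℝ e (y : EuclideanSpace ℝ (Fin N))) ^ 2 ∂(sphereMeasure N) with hc
  have h1 : sphereArea N = N * c := by
    rw [← sphere_one]
    have : ∀ y : Metric.sphere (0 : EuclideanSpace ℝ (Fin N)) 1, (1 : ℝ) =
        ∑ i, (inner ℝ (EuclideanSpace.single i 1) (y : EuclideanSpace ℝ (Fin N)) : ℝ) ^ 2 := by
      intro y
      simp only [EuclideanSpace.inner_single_left, map_one, one_mul]
      rw [sphere_sum_sq]
    rw [integral_congr_ae (Filter.Eventually.of_forall this), integral_finsetSum]
    · simp [key]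
    · intro i _
      exact sphere_integrable N (fun y => (inner ℝ (EuclideanSpace.single i 1) y : ℝ) ^ 2)
        (by fun_prop)
  have h2 := key (WithLp.toLp 2 b)
  rw [EuclideanSpace.real_norm_sq_eq] at h2
  have h3 : ∀ y : EuclideanSpace ℝ (Fin N), (inner ℝ (WithLp.toLp 2 b) y : ℝ)
      = ∑ l, b l * y l := by
    intro y
    simp [PiLp.inner_apply, mul_comm]
  simp only [h3] at h2
  rw [h2, h1]
  field_simp

lemma moment_four_aux (N : ℕ) (e : EuclideanSpace ℝ (Fin N)) (he : ‖e‖ = 1)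
    (u v w x : EuclideanSpace ℝ (Fin N)) :
    ∫ y : Metric.sphere (0 : EuclideanSpace ℝ (Fin N)) 1,
        (inner ℝ u (y : EuclideanSpace ℝ (Fin N)) : ℝ) * inner ℝ v (y : EuclideanSpace ℝ (Fin N))
        * inner ℝ w (y : EuclideanSpace ℝ (Fin N)) * inner ℝ x (y : EuclideanSpace ℝ (Fin N))
        ∂(sphereMeasure N)
      = (∫ y : Metric.sphere (0 : EuclideanSpace ℝ (Fin N)) 1,
        (inner ℝ e (y : EuclideanSpace ℝ (Fin N))) ^ 4 ∂(sphereMeasure N)) / 3 *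
        (inner ℝ u v * inner ℝ w x + inner ℝ u w * inner ℝ v x + inner ℝ u x * inner ℝ v w) := by
  have key := fun v => moment_norm N 4 e v he
  set c := ∫ y : Metric.sphere (0 : EuclideanSpace ℝ (Fin N)) 1,
        (inner ℝ e (y : EuclideanSpace ℝ (Fin N))) ^ 4 ∂(sphereMeasure N) with hc
  have hint : ∀ z : EuclideanSpace ℝ (Fin N), Integrable
      (fun y : Metric.sphere (0 : EuclideanSpace ℝ (Fin N)) 1 =>
        (inner ℝ z (y : EuclideanSpace ℝ (Fin N)) : ℝ) ^ 4) (sphereMeasure N) := by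
    intro z
    exact sphere_integrable N (fun y => (inner ℝ z y : ℝ) ^ 4) (by fun_prop)
  let s : Fin 2 → ℝ := ![1, -1]
  let z : Fin 2 → Fin 2 → Fin 2 → EuclideanSpace ℝ (Fin N) :=
    fun i j k => u + s i • v + s j • w + s k • x
  have hpt : ∀ y : EuclideanSpace ℝ (Fin N),
      (inner ℝ u y : ℝ) * inner ℝ v y * inner ℝ w y * inner ℝ x y
      = ∑ i, ∑ j, ∑ k, (s i * s j * s k / 192) * (inner ℝ (z i j k) y : ℝ) ^ 4 := by
    intro y
    simp only [z, inner_add_left, real_inner_smul_left, Fin.sum_univ_two, s,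
      Matrix.cons_val_zero, Matrix.cons_val_one]
    ring
  have hnorm : ∀ i j k, ‖z i j k‖ ^ 4 = (inner ℝ (z i j k) (z i j k)) ^ 2 := by
    intro i j k
    rw [real_inner_self_eq_norm_sq]; ring
  simp only [hpt]
  rw [integral_finsetSum _ (fun i _ => integrable_finsetSum _ (fun j _ =>
    integrable_finsetSum _ (fun k _ => (hint _).const_mul _)))]
  simp_rw [integral_finsetSum _ (fun j _ =>
    integrable_finsetSum _ (fun k _ => (hint _).const_mul _))]
  simp_rw [integral_finsetSum _ (fun k _ => (hint _).const_mul _)]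
  simp_rw [integral_const_mul, key, hnorm]
  simp only [z, inner_add_left, inner_add_right, real_inner_smul_left, real_inner_smul_right,
    Fin.sum_univ_two, s, Matrix.cons_val_zero, Matrix.cons_val_one]
  rw [real_inner_comm u v, real_inner_comm u w, real_inner_comm u x, real_inner_comm v w,
    real_inner_comm v x, real_inner_comm w x]
  ring

lemma moment_four (N : ℕ) (hN : 0 < N) (a b c d : Fin N) :
    ∫ y : Metric.sphere (0 : EuclideanSpace ℝ (Fin N)) 1,
        (y : EuclideanSpace ℝ (Fin N)) a * (y : EuclideanSpace ℝ (Fin N)) b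
        * (y : EuclideanSpace ℝ (Fin N)) c * (y : EuclideanSpace ℝ (Fin N)) d
        ∂(sphereMeasure N)
      = sphereArea N / (N * (N + 2)) *
        ((if a = b then 1 else 0) * (if c = d then 1 else 0)
        + (if a = c then 1 else 0) * (if b = d then 1 else 0)
        + (if a = d then 1 else 0) * (if b = c then 1 else 0)) := by
  have hNR : (N : ℝ) ≠ 0 := by positivity
  set e : EuclideanSpace ℝ (Fin N) := EuclideanSpace.single ⟨0, hN⟩ 1 with he
  have he1 : ‖e‖ = 1 := by simp [he]
  have key := fun a b c d : Fin N => moment_four_aux N e he1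
    (EuclideanSpace.single a 1) (EuclideanSpace.single b 1)
    (EuclideanSpace.single c 1) (EuclideanSpace.single d 1)
  set C := ∫ y : Metric.sphere (0 : EuclideanSpace ℝ (Fin N)) 1,
        (inner ℝ e (y : EuclideanSpace ℝ (Fin N))) ^ 4 ∂(sphereMeasure N) with hc
  simp only [EuclideanSpace.inner_single_left, map_one, one_mul, EuclideanSpace.single_apply]
    at key
  have h1 : sphereArea N = N * (N + 2) * (C / 3) := by
    rw [← sphere_one]
    have : ∀ y : Metric.sphere (0 : EuclideanSpace ℝ (Fin N)) 1, (1 : ℝ) =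
        ∑ i, ∑ j, (y : EuclideanSpace ℝ (Fin N)) i * (y : EuclideanSpace ℝ (Fin N)) i
        * (y : EuclideanSpace ℝ (Fin N)) j * (y : EuclideanSpace ℝ (Fin N)) j := by
      intro y
      have h := sphere_sum_sq N y
      calc (1 : ℝ) = (∑ i, (y : EuclideanSpace ℝ (Fin N)) i ^ 2)
            * (∑ i, (y : EuclideanSpace ℝ (Fin N)) i ^ 2) := by rw [h]; ring
        _ = _ := by
          rw [Finset.sum_mul_sum]
          refine Finset.sum_congr rfl fun i _ => Finset.sum_congr rfl fun j _ => ?_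
          ring
    have hint : ∀ i j : Fin N, Integrable
        (fun y : Metric.sphere (0 : EuclideanSpace ℝ (Fin N)) 1 =>
        (y : EuclideanSpace ℝ (Fin N)) i * (y : EuclideanSpace ℝ (Fin N)) i
        * (y : EuclideanSpace ℝ (Fin N)) j * (y : EuclideanSpace ℝ (Fin N)) j)
        (sphereMeasure N) := by
      intro i j
      exact sphere_integrable N (fun y => y i * y i * y j * y j) (by fun_prop)
    rw [integral_congr_ae (Filter.Eventually.of_forall this), integral_finsetSum _
      (fun i _ => integrable_finsetSum _ (fun j _ => hint i j))]
    simp_rw [integral_finsetSum _ (fun j _ => hint _ j), key]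
    simp only [← Finset.mul_sum, Finset.sum_add_distrib]
    simp
    ring
  rw [key, h1]
  have h2 : (N : ℝ) + 2 ≠ 0 := by positivity
  field_simp

lemma quad_sq (N : ℕ) (hN : 0 < N) (A : Fin N → Fin N → ℝ) (hA : ∑ p, A p p = 0) :
    ∫ y : Metric.sphere (0 : EuclideanSpace ℝ (Fin N)) 1,
        (∑ p, ∑ q, A p q * (y : EuclideanSpace ℝ (Fin N)) p
          * (y : EuclideanSpace ℝ (Fin N)) q) ^ 2 ∂(sphereMeasure N)
      = sphereArea N / (2 * N * (N + 2)) * ∑ k, ∑ l, (A k l + A l k) ^ 2 := by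
  have hNR : (N : ℝ) ≠ 0 := by positivity
  have h2 : (N : ℝ) + 2 ≠ 0 := by positivity
  have hpt : ∀ y : EuclideanSpace ℝ (Fin N), (∑ p, ∑ q, A p q * y p * y q) ^ 2
      = ∑ p, ∑ q, ∑ r, ∑ s, (A p q * A r s) * (y p * y q * y r * y s) := by
    intro y
    rw [sq, Finset.sum_mul]
    refine Finset.sum_congr rfl fun p _ => ?_
    rw [Finset.sum_mul]
    refine Finset.sum_congr rfl fun q _ => ?_
    rw [Finset.mul_sum]
    refine Finset.sum_congr rfl fun r _ => ?_
    rw [Finset.mul_sum]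
    refine Finset.sum_congr rfl fun s _ => ?_
    ring
  have hint : ∀ p q r s : Fin N, Integrable
        (fun y : Metric.sphere (0 : EuclideanSpace ℝ (Fin N)) 1 => (A p q * A r s) *
        ((y : EuclideanSpace ℝ (Fin N)) p * (y : EuclideanSpace ℝ (Fin N)) q
        * (y : EuclideanSpace ℝ (Fin N)) r * (y : EuclideanSpace ℝ (Fin N)) s))
        (sphereMeasure N) := by
    intro p q r s
    exact sphere_integrable N (fun y => (A p q * A r s) * (y p * y q * y r * y s)) (by fun_prop)
  simp only [hpt]
  rw [integral_finsetSum _ (fun p _ => integrable_finsetSum _ (fun q _ =>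
    integrable_finsetSum _ (fun r _ => integrable_finsetSum _ (fun s _ => hint p q r s))))]
  simp_rw [integral_finsetSum _ (fun q _ =>
    integrable_finsetSum _ (fun r _ => integrable_finsetSum _ (fun s _ => hint _ q r s)))]
  simp_rw [integral_finsetSum _ (fun r _ => integrable_finsetSum _ (fun s _ => hint _ _ r s))]
  simp_rw [integral_finsetSum _ (fun s _ => hint _ _ _ s)]
  simp_rw [integral_const_mul, moment_four N hN]
  set K := sphereArea N / (N * (N + 2)) with hK
  have hK2 : sphereArea N / (2 * N * (N + 2)) = K / 2 := by rw [hK]; field_simp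
  rw [hK2]
  have e1 : ∑ p, ∑ q, ∑ r, ∑ s, (A p q * A r s) * (K *
        ((if p = q then 1 else 0) * (if r = s then 1 else 0)
        + (if p = r then 1 else 0) * (if q = s then 1 else 0)
        + (if p = s then 1 else 0) * (if q = r then 1 else 0)))
      = K * ((∑ p, A p p) * (∑ r, A r r) + ∑ p, ∑ q, A p q * A p q
        + ∑ p, ∑ q, A p q * A q p) := by
    have : ∀ p q r s, (A p q * A r s) * (K *
        ((if p = q then 1 else 0) * (if r = s then 1 else 0)
        + (if p = r then 1 else 0) * (if q = s then 1 else 0)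
        + (if p = s then 1 else 0) * (if q = r then 1 else 0)))
        = K * ((if p = q then (if r = s then A p q * A r s else 0) else 0)
        + (if p = r then (if q = s then A p q * A r s else 0) else 0)
        + (if q = r then (if p = s then A p q * A r s else 0) else 0)) := by
      intro p q r s
      split_ifs <;> ring
    simp_rw [this, ← Finset.mul_sum, Finset.sum_add_distrib]
    congr 1
    congr 1
    · congr 1
      · rw [Finset.sum_mul_sum]
        refine Finset.sum_congr rfl fun p _ => ?_
        rw [Finset.sum_comm]
        refine Finset.sum_congr rfl fun r _ => ?_
        rw [Finset.sum_comm]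
        simp
      · refine Finset.sum_congr rfl fun p _ => Finset.sum_congr rfl fun q _ => ?_
        rw [Finset.sum_comm]
        simp
    · refine Finset.sum_congr rfl fun p _ => Finset.sum_congr rfl fun q _ => ?_
      rw [Finset.sum_comm]
      simp
  rw [e1, hA]
  have e2 : ∑ k, ∑ l, (A k l + A l k) ^ 2
      = 2 * (∑ p, ∑ q, A p q * A p q) + 2 * ∑ p, ∑ q, A p q * A q p := by
    have h3 : ∑ k, ∑ l, A l k * A l k = ∑ p, ∑ q, A p q * A p q := Finset.sum_comm
    have : ∀ k l, (A k l + A l k) ^ 2 = A k l * A k l + A l k * A l k + 2 * (A k l * A l k) := by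
      intro k l; ring
    simp_rw [this, Finset.sum_add_distrib, ← Finset.mul_sum, h3]
    ring
  rw [e2]
  ring

lemma pd_lin (N : ℕ) (k : Fin N) (b : Fin N → ℝ) :
    pd N k (fun y => ∑ l, b l * y l) = fun _ => b k := by
  ext y
  unfold pd
  have : HasFDerivAt (fun y : EuclideanSpace ℝ (Fin N) => ∑ l, b l * y l)
      (∑ l, b l • (EuclideanSpace.proj l : EuclideanSpace ℝ (Fin N) →L[ℝ] ℝ)) y := by
    apply HasFDerivAt.fun_sum
    intro l _
    exact ((EuclideanSpace.proj l : EuclideanSpace ℝ (Fin N) →L[ℝ] ℝ).hasFDerivAt).const_mul (b l)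
  rw [this.fderiv]
  simp [ContinuousLinearMap.sum_apply, EuclideanSpace.single_apply]

lemma pd_quad (N : ℕ) (W : Fin N → Fin N → Fin N → Fin N → ℝ) (i j k : Fin N) :
    pd N k (Hmat N W i j) = fun y => ∑ l, (W i k j l + W i l j k) * y l := by
  ext y
  unfold pd
  have : HasFDerivAt (Hmat N W i j)
      (∑ p, ∑ q, ((W i p j q * y p) • (EuclideanSpace.proj q : EuclideanSpace ℝ (Fin N) →L[ℝ] ℝ)
        + y q • (W i p j q • (EuclideanSpace.proj p : EuclideanSpace ℝ (Fin N) →L[ℝ] ℝ)))) y := by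
    unfold Hmat
    apply HasFDerivAt.fun_sum
    intro p _
    apply HasFDerivAt.fun_sum
    intro q _
    exact (((EuclideanSpace.proj p : EuclideanSpace ℝ (Fin N) →L[ℝ] ℝ).hasFDerivAt).const_mul
      (W i p j q)).mul ((EuclideanSpace.proj q : EuclideanSpace ℝ (Fin N) →L[ℝ] ℝ).hasFDerivAt)
  rw [this.fderiv]
  have hp : ∀ p : Fin N, (EuclideanSpace.proj p : EuclideanSpace ℝ (Fin N) →L[ℝ] ℝ)
      (EuclideanSpace.single k 1) = if p = k then 1 else 0 := by
    intro p
    simp [Pi.single_apply]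
  simp only [ContinuousLinearMap.sum_apply, ContinuousLinearMap.add_apply,
    ContinuousLinearMap.smul_apply, hp, smul_eq_mul, Finset.sum_add_distrib, add_mul]
  simp only [mul_ite, mul_one, mul_zero, Finset.sum_ite_eq', Finset.mem_univ, if_true]
  rw [add_comm]
  congr 1
  rw [Finset.sum_comm]
  simp [mul_comm]

theorem stmt_4 (N : ℕ) (hN : 5 ≤ N)
    (W : Fin N → Fin N → Fin N → Fin N → ℝ)
    (hW1 : ∀ i p j q, W i p j q = - W p i j q)
    (hW2 : ∀ i p j q, W i p j q = - W i p q j)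
    (hW3 : ∀ i p j q, W i p j q = W j q i p)
    (hBianchi : ∀ i p j q, W i p j q + W i j q p + W i q p j = 0)
    (hTrace : ∀ p q, ∑ i : Fin N, W i p i q = 0) :
    (∫ y : Metric.sphere (0 : EuclideanSpace ℝ (Fin N)) 1,
        (∑ i : Fin N, ∑ j : Fin N, (Hmat N W i j ↑y) ^ 2) ∂(sphereMeasure N)
      = sphereArea N / (2 * N * (N + 2))
        * ∑ i : Fin N, ∑ j : Fin N, ∑ k : Fin N, ∑ l : Fin N,
            (W i k j l + W i l j k) ^ 2) ∧
    (∫ y : Metric.sphere (0 : EuclideanSpace ℝ (Fin N)) 1,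
        (∑ i : Fin N, ∑ j : Fin N, ∑ k : Fin N,
          (pd N k (Hmat N W i j) ↑y) ^ 2) ∂(sphereMeasure N)
      = sphereArea N / N
        * ∑ i : Fin N, ∑ j : Fin N, ∑ k : Fin N, ∑ l : Fin N,
            (W i k j l + W i l j k) ^ 2) ∧
    (∫ y : Metric.sphere (0 : EuclideanSpace ℝ (Fin N)) 1,
        (∑ i : Fin N, ∑ j : Fin N, ∑ k : Fin N, ∑ l : Fin N,
          (pd N k (pd N l (Hmat N W i j)) ↑y) ^ 2) ∂(sphereMeasure N)
      = sphereArea N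
        * ∑ i : Fin N, ∑ j : Fin N, ∑ k : Fin N, ∑ l : Fin N,
            (W i k j l + W i l j k) ^ 2) := by
  have hN0 : 0 < N := by omega
  have hcont : ∀ i j, Continuous (Hmat N W i j) := by
    intro i j
    unfold Hmat
    fun_prop
  refine ⟨?_, ?_, ?_⟩
  · have hi : ∀ i j, Integrable (fun y : Metric.sphere (0 : EuclideanSpace ℝ (Fin N)) 1 =>
        (Hmat N W i j ↑y) ^ 2) (sphereMeasure N) := fun i j =>
      sphere_integrable N (fun y => (Hmat N W i j y) ^ 2) ((hcont i j).pow 2)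
    rw [integral_finsetSum _ (fun i _ => integrable_finsetSum _ (fun j _ => hi i j))]
    simp_rw [integral_finsetSum _ (fun j _ => hi _ j), Finset.mul_sum]
    refine Finset.sum_congr rfl fun i _ => Finset.sum_congr rfl fun j _ => ?_
    have hA : ∑ p, W i p j p = 0 := by
      rw [← hTrace i j]
      refine Finset.sum_congr rfl fun p _ => ?_
      rw [hW1, hW2, neg_neg]
    have := quad_sq N hN0 (fun p q => W i p j q) hA
    simp_rw [Finset.mul_sum] at this
    exact this
  · simp only [pd_quad]
    have hi : ∀ i j k, Integrable (fun y : Metric.sphere (0 : EuclideanSpace ℝ (Fin N)) 1 =>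
        (∑ l, (W i k j l + W i l j k) * (y : EuclideanSpace ℝ (Fin N)) l) ^ 2)
        (sphereMeasure N) := fun i j k =>
      sphere_integrable N (fun y => (∑ l, (W i k j l + W i l j k) * y l) ^ 2) (by fun_prop)
    rw [integral_finsetSum _ (fun i _ => integrable_finsetSum _ (fun j _ =>
      integrable_finsetSum _ (fun k _ => hi i j k)))]
    simp_rw [integral_finsetSum _ (fun j _ => integrable_finsetSum _ (fun k _ => hi _ j k)),
      integral_finsetSum _ (fun k _ => hi _ _ k), Finset.mul_sum]
    refine Finset.sum_congr rfl fun i _ => Finset.sum_congr rfl fun j _ =>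
      Finset.sum_congr rfl fun k _ => ?_
    rw [moment_two N hN0, Finset.mul_sum]
  · simp only [pd_quad, pd_lin]
    rw [integral_const, smul_eq_mul, sphereArea, measureReal_def]
    congr 1
    refine Finset.sum_congr rfl fun i _ => Finset.sum_congr rfl fun j _ =>
      Finset.sum_congr rfl fun k _ => Finset.sum_congr rfl fun l _ => ?_
    ring
end
end

section
/- For all p, q ∈ {1,…,N}: (i) ∫_{∂B₁} Σ_{i,j=1}^N H_{ij}(y)² y_p y_q dσ(y) = (2|S^{N−1}|/(N(N+2)(N+4))) Σ_{i,j,k=1}^N (W_{ikjp}+W_{ipjk})(W_{ikjq}+W_{iqjk}) + (|S^{N−1}|/(2N(N+2)(N+4))) (Σ_{i,j,k,ℓ=1}^N (W_{ikjℓ}+W_{iℓjk})²) δ_{pq}; and (ii) ∫_{∂B₁} Σ_{t=1}^N H_{pt}(y) H_{qt}(y) dσ(y) = (|S^{N−1}|/(2N(N+2))) Σ_{i,j,k=1}^N (W_{ikjp}+W_{ipjk})(W_{ikjq}+W_{iqjk}). -/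
open scoped BigOperators
open MeasureTheory

noncomputable section

open Set Metric

/-- Monomials. -/
def PM {N : ℕ} : List (Fin N) → EuclideanSpace ℝ (Fin N) → ℝ
  | [], _ => 1
  | b :: l, y => y b * PM l y

/-- Derivatives of monomials. -/
def dPM {N : ℕ} (a : Fin N) : List (Fin N) → EuclideanSpace ℝ (Fin N) → ℝ
  | [], _ => 0
  | b :: l, y => (if a = b then 1 else 0) * PM l y + y b * dPM a l y

/-- The Gaussian. -/
def GG {N : ℕ} (y : EuclideanSpace ℝ (Fin N)) : ℝ := Real.exp (-(1/2) * ‖y‖ ^ 2)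

lemma PM_cont {N : ℕ} (l : List (Fin N)) : Continuous (PM l) := by
  induction l with
  | nil => exact continuous_const
  | cons b l ih => 
    show Continuous (fun y => y b * PM l y)
    fun_prop

lemma dPM_cont {N : ℕ} (a : Fin N) (l : List (Fin N)) : Continuous (dPM a l) := by
  induction l with
  | nil => exact continuous_const
  | cons b l ih => 
    have := PM_cont l
    show Continuous (fun y => (if a = b then (1:ℝ) else 0) * PM l y + y b * dPM a l y)
    fun_prop

lemma GG_cont {N : ℕ} : Continuous (GG (N := N)) := by unfold GG; fun_prop

lemma PM_bound {N : ℕ} (l : List (Fin N)) (y : EuclideanSpace ℝ (Fin N)) :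
    |PM l y| ≤ ‖y‖ ^ l.length := by
  induction l with
  | nil => simp [PM]
  | cons b l ih =>
    simp only [PM, abs_mul, List.length_cons, pow_succ']
    have : |y b| ≤ ‖y‖ := PiLp.norm_apply_le y b
    gcongr

lemma PM_append {N : ℕ} (l m : List (Fin N)) (y : EuclideanSpace ℝ (Fin N)) :
    PM (l ++ m) y = PM l y * PM m y := by
  induction l with
  | nil => simp [PM]
  | cons b l ih => simp only [List.cons_append, PM, ih]; ring

lemma PM_smul {N : ℕ} (r : ℝ) (l : List (Fin N)) (y : EuclideanSpace ℝ (Fin N)) :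
    PM l (r • y) = r ^ l.length * PM l y := by
  induction l with
  | nil => simp [PM]
  | cons b l ih =>
    simp only [PM, ih, List.length_cons, PiLp.smul_apply, smul_eq_mul]; ring

lemma dPM_smul {N : ℕ} (r : ℝ) (a : Fin N) (l : List (Fin N)) (y : EuclideanSpace ℝ (Fin N)) :
    r * dPM a l (r • y) = r ^ l.length * dPM a l y := by
  induction l with
  | nil => simp [dPM]
  | cons b l ih =>
    have : r * dPM a (b :: l) (r • y) = (if a = b then 1 else 0) * (r * PM l (r • y))
      + (r • y) b * (r * dPM a l (r • y)) := by
      simp only [dPM]; ring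
    rw [this, ih, PM_smul]
    simp only [dPM, List.length_cons, PiLp.smul_apply, smul_eq_mul]; ring

lemma radial_integrable (k : ℕ) :
    IntegrableOn (fun r : ℝ => r ^ k * Real.exp (-(1/2) * r ^ 2)) (Ioi 0) := by
  have := integrableOn_rpow_mul_exp_neg_mul_sq (b := 1/2) (by norm_num) (s := k)
    (by have : (0:ℝ) ≤ k := by positivity
        linarith)
  simpa using this

lemma norm_integrable {N : ℕ} (k : ℕ) :
    Integrable (fun y : EuclideanSpace ℝ (Fin N) => ‖y‖ ^ k * GG y) := by
  rcases subsingleton_or_nontrivial (EuclideanSpace ℝ (Fin N)) with h | h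
  · have hc : Continuous (fun y : EuclideanSpace ℝ (Fin N) => ‖y‖ ^ k * GG y) := by
      have := GG_cont (N := N)
      fun_prop
    exact hc.integrable_of_hasCompactSupport (HasCompactSupport.of_compactSpace _)
  · have := (integrable_fun_norm_addHaar (volume : Measure (EuclideanSpace ℝ (Fin N)))
      (f := fun r => r ^ k * Real.exp (-(1/2) * r ^ 2)))
    refine this.2 ?_
    refine (radial_integrable (Module.finrank ℝ (EuclideanSpace ℝ (Fin N)) - 1 + k)).congr_fun
      (fun r _ => ?_) measurableSet_Ioi
    simp only [smul_eq_mul, pow_add]; ring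

lemma PM_integrable {N : ℕ} (l : List (Fin N)) :
    Integrable (fun y => PM l y * GG y) := by
  refine (norm_integrable l.length).mono' ((PM_cont l).mul GG_cont).aestronglyMeasurable ?_
  refine .of_forall fun y => ?_
  have hG : 0 ≤ GG y := (Real.exp_pos _).le
  rw [Real.norm_eq_abs, abs_mul, abs_of_nonneg hG]
  exact mul_le_mul_of_nonneg_right (PM_bound l y) hG

lemma dPM_integrable_aux {N : ℕ} (a : Fin N) (l m : List (Fin N)) :
    Integrable (fun y => PM m y * dPM a l y * GG y) := by
  induction l generalizing m with
  | nil => simp [dPM]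
  | cons b l ih =>
    have h1 := (PM_integrable (m ++ l)).const_mul (if a = b then (1:ℝ) else 0)
    have h2 := ih (b :: m)
    refine (h1.add h2).congr (.of_forall fun y => ?_)
    simp only [Pi.add_apply, dPM, PM_append, PM]; ring

lemma dPM_integrable {N : ℕ} (a : Fin N) (l : List (Fin N)) :
    Integrable (fun y => dPM a l y * GG y) := by
  simpa [PM] using dPM_integrable_aux a l []

lemma PM_lineDeriv {N : ℕ} (a : Fin N) (l : List (Fin N)) (y : EuclideanSpace ℝ (Fin N)) :
    HasLineDerivAt ℝ (PM l) (dPM a l y) y (EuclideanSpace.single a 1) := by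
  induction l with
  | nil => exact hasDerivAt_const (0:ℝ) (1:ℝ)
  | cons b l ih =>
    have h1 : HasDerivAt (fun t : ℝ => (y + t • EuclideanSpace.single a (1:ℝ)) b)
        (if a = b then 1 else 0) 0 := by
      have : HasDerivAt (fun t : ℝ => y b + t * (if a = b then 1 else 0))
        (1 * (if a = b then 1 else 0)) 0 := ((hasDerivAt_id (0:ℝ)).mul_const _).const_add _
      rw [one_mul] at this
      convert! this using 2 with t
      simp [PiLp.single_apply, eq_comm]
    have h2 := h1.mul ih
    unfold HasLineDerivAt
    convert! h2 using 1
    simp [dPM]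

lemma GG_lineDeriv {N : ℕ} (a : Fin N) (y : EuclideanSpace ℝ (Fin N)) :
    HasLineDerivAt ℝ GG (- (y a * GG y)) y (EuclideanSpace.single a 1) := by
  have h := ((hasStrictFDerivAt_norm_sq y).hasFDerivAt.const_mul (-(1/2:ℝ))).exp.hasLineDerivAt
    (EuclideanSpace.single a 1)
  convert! h using 1
  have e : inner ℝ y (EuclideanSpace.single a (1:ℝ)) = y a := by
    simp [EuclideanSpace.inner_single_right]
  simp [GG, e]
  ring

lemma gauss_ibp {N : ℕ} (a : Fin N) (l : List (Fin N)) :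
    ∫ y, PM (a :: l) y * GG y = ∫ y, dPM a l y * GG y := by
  have := integral_bilinear_hasLineDerivAt_right_eq_neg_left_of_integrable
    (μ := (volume : Measure (EuclideanSpace ℝ (Fin N))))
    (f := PM l) (f' := dPM a l) (g := GG) (g' := fun y => - (y a * GG y))
    (v := EuclideanSpace.single a 1) (B := ContinuousLinearMap.mul ℝ ℝ)
    (by simpa using dPM_integrable a l)
    (by
      have := (PM_integrable (a :: l)).neg
      refine this.congr (.of_forall fun y => ?_)
      simp [PM]; ring)
    (by simpa using PM_integrable l)
    (fun y _ => PM_lineDeriv a l y) (fun y _ => GG_lineDeriv a y)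
  simp only [ContinuousLinearMap.mul_apply'] at this
  rw [← neg_inj, ← this, ← integral_neg]
  congr 1; ext y; simp only [PM]; ring

/-- radial constants -/
def cc (N k : ℕ) : ℝ :=
  ∫ r : Ioi (0:ℝ), r.1 ^ k * Real.exp (-(1/2) * r.1 ^ 2) ∂(Measure.volumeIoiPow (N - 1))

lemma cc_eq (N k : ℕ) (hN : 1 ≤ N) : cc N k =
    (1/2 : ℝ) ^ (-((N:ℝ) + k) / 2) * (1/2) * Real.Gamma (((N:ℝ) + k) / 2) := by
  have h := integral_rpow_mul_exp_neg_mul_rpow (p := 2) (q := (N:ℝ) + k - 1) (b := 1/2)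
    (by norm_num) (by
      have : (1:ℝ) ≤ N := by exact_mod_cast hN
      have : (0:ℝ) ≤ k := by positivity
      linarith) (by norm_num)
  have e : (N:ℝ) + k - 1 + 1 = N + k := by ring
  rw [e] at h
  rw [← h]
  unfold cc
  simp only [Measure.volumeIoiPow, ENNReal.ofReal]
  rw [integral_withDensity_eq_integral_smul,
        integral_subtype_comap measurableSet_Ioi fun a : ℝ ↦ Real.toNNReal (a ^ (N - 1)) •
          (a ^ k * Real.exp (-(1/2) * a ^ 2)),
        setIntegral_congr_fun measurableSet_Ioi fun x hx ↦ ?_]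
  · rw [NNReal.smul_def, Real.coe_toNNReal _ (pow_nonneg hx.out.le _)]
    have : (N:ℝ) + k - 1 = ((N - 1 + k : ℕ) : ℝ) := by
      push_cast [Nat.cast_sub hN]; ring
    rw [this, Real.rpow_natCast, pow_add, smul_eq_mul, Real.rpow_ofNat, mul_assoc]
  · exact (measurable_subtype_coe.pow_const _).real_toNNReal

lemma cc_pos (N k : ℕ) (hN : 1 ≤ N) : 0 < cc N k := by
  rw [cc_eq N k hN]
  have : 0 < ((N:ℝ) + k) / 2 := by positivity
  have := Real.Gamma_pos_of_pos this
  positivity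

lemma cc_succ (N k : ℕ) (hN : 1 ≤ N) : cc N (k + 2) = (N + k) * cc N k := by
  rw [cc_eq N k hN, cc_eq N _ hN]
  have h : 0 < ((N:ℝ) + k) / 2 := by positivity
  have e : ((N:ℝ) + (k + 2 : ℕ)) / 2 = ((N:ℝ) + k) / 2 + 1 := by push_cast; ring
  have e2 : -((N:ℝ) + (k + 2 : ℕ)) / 2 = -((N:ℝ) + k) / 2 + (-1) := by push_cast; ring
  rw [e, e2, Real.Gamma_add_one h.ne', Real.rpow_add (by norm_num), Real.rpow_neg_one]
  ring

lemma polar {N : ℕ} (hN : 1 ≤ N) (f : EuclideanSpace ℝ (Fin N) → ℝ) (k : ℕ)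
    (hf : ∀ r : ℝ, 0 < r → ∀ y, f (r • y) = r ^ k * f y) :
    ∫ y, f y * GG y = (∫ y : sphere (0 : EuclideanSpace ℝ (Fin N)) 1, f y ∂(sphereMeasure N))
      * cc N k := by
  have : Nonempty (Fin N) := ⟨⟨0, hN⟩⟩
  have : Nontrivial (EuclideanSpace ℝ (Fin N)) := inferInstance
  have h1 := (volume : Measure (EuclideanSpace ℝ (Fin N))).measurePreserving_homeomorphUnitSphereProd.integral_comp
        (Homeomorph.measurableEmbedding _)
        (fun x : sphere (0 : EuclideanSpace ℝ (Fin N)) 1 × Ioi (0:ℝ) =>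
          f x.1 * (x.2.1 ^ k * Real.exp (-(1/2) * x.2.1 ^ 2)))
  rw [integral_prod_mul (fun x : sphere (0 : EuclideanSpace ℝ (Fin N)) 1 => f x)
    (fun r : Ioi (0:ℝ) => r.1 ^ k * Real.exp (-(1/2) * r.1 ^ 2))] at h1
  unfold sphereMeasure cc
  rw [finrank_euclideanSpace_fin] at h1
  rw [← h1]
  have h2 : ∫ y, f y * GG y = ∫ x : ({(0)}ᶜ : Set (EuclideanSpace ℝ (Fin N))),
      f x.1 * GG x.1 ∂((volume : Measure (EuclideanSpace ℝ (Fin N))).comap Subtype.val) := by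
    rw [integral_subtype_comap (measurableSet_singleton _).compl fun x ↦ f x * GG x,
        restrict_compl_singleton]
  rw [h2]
  refine integral_congr_ae (.of_forall ?_)
  rintro ⟨y, hy⟩
  have hy' : 0 < ‖y‖ := norm_pos_iff.2 hy
  have := hf ‖y‖ hy' (‖y‖⁻¹ • y)
  rw [smul_inv_smul₀ hy'.ne'] at this
  simp only [homeomorphUnitSphereProd_apply_fst_coe, homeomorphUnitSphereProd_apply_snd_coe]
  rw [this, GG]; ring


lemma sphere_rec {N : ℕ} (hN : 1 ≤ N) (a : Fin N) (l : List (Fin N)) (k : ℕ)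
    (hl : l.length = k + 1) :
    (N + k) * ∫ y : sphere (0 : EuclideanSpace ℝ (Fin N)) 1, PM (a :: l) y ∂(sphereMeasure N)
    = ∫ y : sphere (0 : EuclideanSpace ℝ (Fin N)) 1, dPM a l y ∂(sphereMeasure N) := by
  have h := gauss_ibp a l
  rw [polar hN (PM (a :: l)) (k + 2) (fun r _ y => by rw [PM_smul]; simp [hl]),
    polar hN (dPM a l) k (fun r hr y => ?_), cc_succ N k hN] at h
  · have := cc_pos N k hN
    apply mul_right_cancel₀ this.ne'
    linarith
  · have := dPM_smul r a l y
    rw [hl, pow_succ] at this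
    apply mul_left_cancel₀ hr.ne'
    linarith

lemma sphere_int {N : ℕ} {f : EuclideanSpace ℝ (Fin N) → ℝ} (hf : Continuous f) :
    Integrable (fun y : sphere (0 : EuclideanSpace ℝ (Fin N)) 1 => f y) (sphereMeasure N) := by
  have : IsFiniteMeasure (sphereMeasure N) := by unfold sphereMeasure; infer_instance
  exact (hf.comp continuous_subtype_val).integrable_of_hasCompactSupport
    (HasCompactSupport.of_compactSpace _)

/-- sphere moments -/
def MM {N : ℕ} (l : List (Fin N)) : ℝ :=
  ∫ y : sphere (0 : EuclideanSpace ℝ (Fin N)) 1, PM l y ∂(sphereMeasure N)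

/-- Kronecker delta -/
def dl {N : ℕ} (a b : Fin N) : ℝ := if a = b then 1 else 0

lemma MM_int {N : ℕ} (c : ℝ) (l : List (Fin N)) :
    Integrable (fun y : sphere (0 : EuclideanSpace ℝ (Fin N)) 1 => c * PM l y)
      (sphereMeasure N) := (sphere_int (PM_cont l)).const_mul c

lemma MM0 {N : ℕ} : MM ([] : List (Fin N)) = sphereArea N := by
  simp [MM, PM, sphereArea, Measure.real]

lemma MM2 {N : ℕ} (hN : 1 ≤ N) (a b : Fin N) :
    N * MM [a, b] = dl a b * sphereArea N := by
  have h := sphere_rec hN a [b] 0 rfl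
  have e : ∀ y : EuclideanSpace ℝ (Fin N), dPM a [b] y = dl a b * PM [] y := by
    intro y; simp only [dPM, PM, dl]; ring
  simp only [e] at h
  rw [integral_const_mul] at h
  change _ = dl a b * MM [] at h
  rw [MM0] at h
  rw [← h]; simp [MM]

lemma MM4 {N : ℕ} (hN : 1 ≤ N) (a b c d : Fin N) :
    (N + 2) * MM [a, b, c, d] =
      dl a b * MM [c, d] + dl a c * MM [b, d] + dl a d * MM [b, c] := by
  have h := sphere_rec hN a [b, c, d] 2 rfl
  have e : ∀ y : EuclideanSpace ℝ (Fin N), dPM a [b, c, d] y =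
      dl a b * PM [c, d] y + dl a c * PM [b, d] y + dl a d * PM [b, c] y := by
    intro y; simp only [dPM, PM, dl]; ring
  simp only [e] at h
  rw [integral_add ((MM_int _ _).fun_add (MM_int _ _)) (MM_int _ _),
    integral_add (MM_int _ _) (MM_int _ _)] at h
  simp only [integral_const_mul] at h
  exact_mod_cast h

lemma MM6 {N : ℕ} (hN : 1 ≤ N) (a b c d e f : Fin N) :
    (N + 4) * MM [a, b, c, d, e, f] =
      dl a b * MM [c, d, e, f] + dl a c * MM [b, d, e, f] + dl a d * MM [b, c, e, f]
      + dl a e * MM [b, c, d, f] + dl a f * MM [b, c, d, e] := by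
  have h := sphere_rec hN a [b, c, d, e, f] 4 rfl
  have e : ∀ y : EuclideanSpace ℝ (Fin N), dPM a [b, c, d, e, f] y =
      dl a b * PM [c, d, e, f] y + dl a c * PM [b, d, e, f] y + dl a d * PM [b, c, e, f] y
      + dl a e * PM [b, c, d, f] y + dl a f * PM [b, c, d, e] y := by
    intro y; simp only [dPM, PM, dl]; ring
  simp only [e] at h
  rw [integral_add ((((MM_int _ _).fun_add (MM_int _ _)).fun_add (MM_int _ _)).fun_add (MM_int _ _))
      (MM_int _ _),
    integral_add (((MM_int _ _).fun_add (MM_int _ _)).fun_add (MM_int _ _)) (MM_int _ _),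
    integral_add ((MM_int _ _).fun_add (MM_int _ _)) (MM_int _ _),
    integral_add (MM_int _ _) (MM_int _ _)] at h
  simp only [integral_const_mul] at h
  exact_mod_cast h

lemma MM4' {N : ℕ} (hN : 1 ≤ N) (a b c d : Fin N) :
    MM [a, b, c, d] = sphereArea N / (N * (N + 2)) *
      (dl a b * dl c d + dl a c * dl b d + dl a d * dl b c) := by
  have hN' : (0:ℝ) < N := by exact_mod_cast hN
  have h := MM4 hN a b c d
  have h1 := MM2 hN c d
  have h2 := MM2 hN b d
  have h3 := MM2 hN b c
  field_simp
  linear_combination N * h + dl a b * h1 + dl a c * h2 + dl a d * h3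

lemma MM6' {N : ℕ} (hN : 1 ≤ N) (a b c d e f : Fin N) :
    MM [a, b, c, d, e, f] = sphereArea N / (N * (N + 2) * (N + 4)) *
      (dl a b * (dl c d * dl e f + dl c e * dl d f + dl c f * dl d e)
      + dl a c * (dl b d * dl e f + dl b e * dl d f + dl b f * dl d e)
      + dl a d * (dl b c * dl e f + dl b e * dl c f + dl b f * dl c e)
      + dl a e * (dl b c * dl d f + dl b d * dl c f + dl b f * dl c d)
      + dl a f * (dl b c * dl d e + dl b d * dl c e + dl b e * dl c d)) := by
  have hN' : (0:ℝ) < N := by exact_mod_cast hN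
  have h := MM6 hN a b c d e f
  simp only [MM4' hN] at h
  have : MM [a, b, c, d, e, f] = ((N + 4) * MM [a, b, c, d, e, f]) / (N + 4) := by
    field_simp
  rw [this, h]
  field_simp

/-- quadratic forms -/
def QQ {N : ℕ} (A : Fin N → Fin N → ℝ) (y : EuclideanSpace ℝ (Fin N)) : ℝ :=
  ∑ a, ∑ b, A a b * y a * y b

lemma QQ4 {N : ℕ} (hN : 1 ≤ N) (A B : Fin N → Fin N → ℝ)
    (hB : ∀ a b, B a b = B b a) (tA : ∑ a, A a a = 0) :
    ∫ y : sphere (0 : EuclideanSpace ℝ (Fin N)) 1, QQ A y * QQ B y ∂(sphereMeasure N)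
      = sphereArea N / (N * (N + 2)) * (2 * ∑ a, ∑ b, A a b * B a b) := by
  have e : ∀ y : EuclideanSpace ℝ (Fin N), QQ A y * QQ B y =
      ∑ a, ∑ b, ∑ c, ∑ d, (A a b * B c d) * PM [a, b, c, d] y := by
    intro y
    simp only [QQ, Finset.sum_mul]
    simp only [Finset.mul_sum, PM]
    refine Finset.sum_congr rfl fun a _ => Finset.sum_congr rfl fun b _ =>
      Finset.sum_congr rfl fun c _ => Finset.sum_congr rfl fun d _ => ?_
    ring
  simp only [e]
  have h1 : ∫ y : sphere (0 : EuclideanSpace ℝ (Fin N)) 1,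
      (∑ a, ∑ b, ∑ c, ∑ d, (A a b * B c d) * PM [a, b, c, d] y) ∂(sphereMeasure N)
      = ∑ a, ∑ b, ∑ c, ∑ d, (A a b * B c d) * MM [a, b, c, d] := by
    have I := fun (c : ℝ) (l : List (Fin N)) => MM_int c l
    rw [integral_finsetSum]
    swap
    · exact fun _ _ => integrable_finsetSum _ fun _ _ => integrable_finsetSum _ fun _ _ =>
        integrable_finsetSum _ fun _ _ => I _ _
    refine Finset.sum_congr rfl fun a _ => ?_
    rw [integral_finsetSum]
    swap
    · exact fun _ _ => integrable_finsetSum _ fun _ _ =>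
        integrable_finsetSum _ fun _ _ => I _ _
    refine Finset.sum_congr rfl fun b _ => ?_
    rw [integral_finsetSum]
    swap
    · exact fun _ _ => integrable_finsetSum _ fun _ _ => I _ _
    refine Finset.sum_congr rfl fun c _ => ?_
    rw [integral_finsetSum]
    swap
    · exact fun _ _ => I _ _
    refine Finset.sum_congr rfl fun d _ => ?_
    rw [integral_const_mul]; rfl
  rw [h1]
  simp only [MM4' hN]
  have h2 : ∑ a, ∑ b, ∑ c, ∑ d, (A a b * B c d) *
      (dl a b * dl c d + dl a c * dl b d + dl a d * dl b c) =
      2 * ∑ a, ∑ b, A a b * B a b := by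
    simp only [dl, mul_add, Finset.sum_add_distrib]
    simp [← Finset.mul_sum, ← Finset.sum_mul, tA]
    simp only [← hB, two_mul]
  rw [← h2]
  simp only [Finset.mul_sum]
  refine Finset.sum_congr rfl fun a _ => Finset.sum_congr rfl fun b _ =>
      Finset.sum_congr rfl fun c _ => Finset.sum_congr rfl fun d _ => ?_
  ring

lemma QQ6 {N : ℕ} (hN : 1 ≤ N) (A : Fin N → Fin N → ℝ)
    (hA : ∀ a b, A a b = A b a) (tA : ∑ a, A a a = 0) (p q : Fin N) :
    ∫ y : sphere (0 : EuclideanSpace ℝ (Fin N)) 1,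
      QQ A y ^ 2 * (y : EuclideanSpace ℝ (Fin N)) p * (y : EuclideanSpace ℝ (Fin N)) q
        ∂(sphereMeasure N)
      = sphereArea N / (N * (N + 2) * (N + 4)) *
        (2 * (∑ a, ∑ b, A a b ^ 2) * dl p q + 8 * ∑ k, A k p * A k q) := by
  have e : ∀ y : EuclideanSpace ℝ (Fin N), QQ A y ^ 2 * y p * y q =
      ∑ a, ∑ b, ∑ c, ∑ d, (A a b * A c d) * PM [a, b, c, d, p, q] y := by
    intro y
    have : QQ A y ^ 2 * y p * y q = QQ A y * (QQ A y * (y p * y q)) := by ring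
    rw [this]
    simp only [QQ, Finset.sum_mul]
    simp only [Finset.mul_sum, PM]
    refine Finset.sum_congr rfl fun a _ => Finset.sum_congr rfl fun b _ =>
      Finset.sum_congr rfl fun c _ => Finset.sum_congr rfl fun d _ => ?_
    ring
  simp only [e]
  have h1 : ∫ y : sphere (0 : EuclideanSpace ℝ (Fin N)) 1,
      (∑ a, ∑ b, ∑ c, ∑ d, (A a b * A c d) * PM [a, b, c, d, p, q] y) ∂(sphereMeasure N)
      = ∑ a, ∑ b, ∑ c, ∑ d, (A a b * A c d) * MM [a, b, c, d, p, q] := by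
    have I := fun (c : ℝ) (l : List (Fin N)) => MM_int c l
    rw [integral_finsetSum]
    swap
    · exact fun _ _ => integrable_finsetSum _ fun _ _ => integrable_finsetSum _ fun _ _ =>
        integrable_finsetSum _ fun _ _ => I _ _
    refine Finset.sum_congr rfl fun a _ => ?_
    rw [integral_finsetSum]
    swap
    · exact fun _ _ => integrable_finsetSum _ fun _ _ =>
        integrable_finsetSum _ fun _ _ => I _ _
    refine Finset.sum_congr rfl fun b _ => ?_
    rw [integral_finsetSum]
    swap
    · exact fun _ _ => integrable_finsetSum _ fun _ _ => I _ _
    refine Finset.sum_congr rfl fun c _ => ?_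
    rw [integral_finsetSum]
    swap
    · exact fun _ _ => I _ _
    refine Finset.sum_congr rfl fun d _ => ?_
    rw [integral_const_mul]; rfl
  rw [h1]
  simp only [MM6' hN]
  have h2 : ∑ a, ∑ b, ∑ c, ∑ d, (A a b * A c d) *
      (dl a b * (dl c d * dl p q + dl c p * dl d q + dl c q * dl d p)
      + dl a c * (dl b d * dl p q + dl b p * dl d q + dl b q * dl d p)
      + dl a d * (dl b c * dl p q + dl b p * dl c q + dl b q * dl c p)
      + dl a p * (dl b c * dl d q + dl b d * dl c q + dl b q * dl c d)
      + dl a q * (dl b c * dl d p + dl b d * dl c p + dl b p * dl c d)) =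
      2 * (∑ a, ∑ b, A a b ^ 2) * dl p q + 8 * ∑ k, A k p * A k q := by
    generalize dl p q = D
    simp only [dl, mul_add, Finset.sum_add_distrib]
    simp [← Finset.mul_sum, ← Finset.sum_mul, tA]
    have e1 : ∀ i j, A i j * A j i = A i j ^ 2 := fun i j => by rw [hA j i]; ring
    have e2 : ∀ i j, A i j * A i j = A i j ^ 2 := fun i j => by ring
    have e3 : ∀ x, A x q * A x p = A x p * A x q := fun x => by ring
    simp only [hA p, hA q, e1, e2, e3]
    ring
  rw [← h2]
  simp only [Finset.mul_sum]
  refine Finset.sum_congr rfl fun a _ => Finset.sum_congr rfl fun b _ =>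
      Finset.sum_congr rfl fun c _ => Finset.sum_congr rfl fun d _ => ?_
  ring

lemma Hmat_eq {N : ℕ} (W : Fin N → Fin N → Fin N → Fin N → ℝ) (i j : Fin N)
    (y : EuclideanSpace ℝ (Fin N)) :
    Hmat N W i j y = 1 / 2 * QQ (fun a b => W i a j b + W i b j a) y := by
  have h : ∑ a, ∑ b, W i b j a * y a * y b = Hmat N W i j y := by
    rw [Finset.sum_comm]
    unfold Hmat
    refine Finset.sum_congr rfl fun a _ => Finset.sum_congr rfl fun b _ => ?_
    ring
  have h2 : QQ (fun a b => W i a j b + W i b j a) y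
      = Hmat N W i j y + ∑ a, ∑ b, W i b j a * y a * y b := by
    simp only [QQ, Hmat, add_mul, Finset.sum_add_distrib]
  rw [h2, h]; ring

lemma QQ_cont {N : ℕ} (A : Fin N → Fin N → ℝ) : Continuous (QQ A) := by
  unfold QQ
  fun_prop

theorem stmt_5 (N : ℕ) (hN : 5 ≤ N)
    (W : Fin N → Fin N → Fin N → Fin N → ℝ)
    (hW1 : ∀ i p j q, W i p j q = - W p i j q)
    (hW2 : ∀ i p j q, W i p j q = - W i p q j)
    (hW3 : ∀ i p j q, W i p j q = W j q i p)
    (hBianchi : ∀ i p j q, W i p j q + W i j q p + W i q p j = 0)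
    (hTrace : ∀ p q, ∑ i : Fin N, W i p i q = 0) :
    ∀ p q : Fin N,
    (∫ y : Metric.sphere (0 : EuclideanSpace ℝ (Fin N)) 1,
        (∑ i : Fin N, ∑ j : Fin N, (Hmat N W i j ↑y) ^ 2) * ((y : EuclideanSpace ℝ (Fin N)) p) * ((y : EuclideanSpace ℝ (Fin N)) q)
          ∂(sphereMeasure N)
      = 2 * sphereArea N / (N * (N + 2) * (N + 4))
          * (∑ i : Fin N, ∑ j : Fin N, ∑ k : Fin N,
              (W i k j p + W i p j k) * (W i k j q + W i q j k))
        + sphereArea N / (2 * N * (N + 2) * (N + 4))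
          * (∑ i : Fin N, ∑ j : Fin N, ∑ k : Fin N, ∑ l : Fin N,
              (W i k j l + W i l j k) ^ 2)
          * (if p = q then (1 : ℝ) else 0)) ∧
    (∫ y : Metric.sphere (0 : EuclideanSpace ℝ (Fin N)) 1,
        (∑ t : Fin N, Hmat N W p t ↑y * Hmat N W q t ↑y) ∂(sphereMeasure N)
      = sphereArea N / (2 * N * (N + 2))
          * ∑ i : Fin N, ∑ j : Fin N, ∑ k : Fin N,
              (W i k j p + W i p j k) * (W i k j q + W i q j k)) := by
  have hN1 : 1 ≤ N := by omega
  have hflip : ∀ i p j q, W i p j q = W p i q j := by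
    intro i p j q
    rw [hW1, hW2, neg_neg]
  have hsym : ∀ i j a b, W i a j b + W i b j a = W i b j a + W i a j b :=
    fun i j a b => add_comm _ _
  have htr : ∀ i j, ∑ a, (W i a j a + W i a j a) = 0 := by
    intro i j
    rw [Finset.sum_add_distrib]
    have : ∑ a, W i a j a = 0 := by
      rw [← hTrace i j]
      exact Finset.sum_congr rfl fun a _ => hflip _ _ _ _
    rw [this, add_zero]
  intro p q
  constructor
  · have e : ∀ y : EuclideanSpace ℝ (Fin N),
        (∑ i : Fin N, ∑ j : Fin N, (Hmat N W i j y) ^ 2) * y p * y q =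
        ∑ i : Fin N, ∑ j : Fin N, 1 / 4 *
          (QQ (fun a b => W i a j b + W i b j a) y ^ 2 * y p * y q) := by
      intro y
      simp only [Finset.sum_mul, Hmat_eq]
      refine Finset.sum_congr rfl fun a _ => Finset.sum_congr rfl fun b _ => ?_
      ring
    simp only [e]
    have I : ∀ i j, Integrable (fun y : sphere (0 : EuclideanSpace ℝ (Fin N)) 1 =>
        1 / 4 * (QQ (fun a b => W i a j b + W i b j a) y ^ 2
          * (y : EuclideanSpace ℝ (Fin N)) p * (y : EuclideanSpace ℝ (Fin N)) q))
        (sphereMeasure N) := by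
      intro i j
      have := QQ_cont (fun a b => W i a j b + W i b j a)
      exact sphere_int (f := fun y => 1 / 4 * (QQ (fun a b => W i a j b + W i b j a) y ^ 2
          * y p * y q)) (by fun_prop)
    rw [integral_finsetSum _ fun i _ => integrable_finsetSum _ fun j _ => I i j]
    have h1 : ∀ i, ∫ y : sphere (0 : EuclideanSpace ℝ (Fin N)) 1, ∑ j : Fin N,
        1 / 4 * (QQ (fun a b => W i a j b + W i b j a) y ^ 2
          * (y : EuclideanSpace ℝ (Fin N)) p * (y : EuclideanSpace ℝ (Fin N)) q)
        ∂(sphereMeasure N) = ∑ j : Fin N, 1 / 4 * (sphereArea N / (N * (N + 2) * (N + 4)) *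
        (2 * (∑ a, ∑ b, (W i a j b + W i b j a) ^ 2) * dl p q
          + 8 * ∑ k, (W i k j p + W i p j k) * (W i k j q + W i q j k))) := by
      intro i
      rw [integral_finsetSum _ fun j _ => I i j]
      refine Finset.sum_congr rfl fun j _ => ?_
      rw [integral_const_mul, QQ6 hN1 _ (hsym i j) (htr i j)]
    simp only [h1]
    have h2 : (if p = q then (1:ℝ) else 0) = dl p q := rfl
    rw [h2]
    simp only [← Finset.mul_sum, Finset.sum_add_distrib, ← Finset.sum_mul]
    have hN' : (0:ℝ) < N := by exact_mod_cast hN1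
    field_simp
    ring
  · have e : ∀ y : EuclideanSpace ℝ (Fin N),
        (∑ t : Fin N, Hmat N W p t y * Hmat N W q t y) =
        ∑ t : Fin N, 1 / 4 * (QQ (fun a b => W p a t b + W p b t a) y *
          QQ (fun a b => W q a t b + W q b t a) y) := by
      intro y
      simp only [Hmat_eq]
      refine Finset.sum_congr rfl fun a _ => ?_
      ring
    simp only [e]
    rw [integral_finsetSum]
    swap
    · intro t _
      have h1 := QQ_cont (fun a b => W p a t b + W p b t a)
      have h2 := QQ_cont (fun a b => W q a t b + W q b t a)
      exact sphere_int (f := fun y => 1 / 4 * (QQ (fun a b => W p a t b + W p b t a) y *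
          QQ (fun a b => W q a t b + W q b t a) y)) (by fun_prop)
    have h1 : ∀ t, ∫ y : sphere (0 : EuclideanSpace ℝ (Fin N)) 1,
        1 / 4 * (QQ (fun a b => W p a t b + W p b t a) y *
          QQ (fun a b => W q a t b + W q b t a) y) ∂(sphereMeasure N)
        = 1 / 4 * (sphereArea N / (N * (N + 2)) * (2 * ∑ a, ∑ b,
          (W a t b p + W a p b t) * (W a t b q + W a q b t))) := by
      intro t
      rw [integral_const_mul, QQ4 hN1 _ _ (hsym q t) (htr p t)]
      congr 3
      refine Finset.sum_congr rfl fun a _ => Finset.sum_congr rfl fun b _ => ?_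
      rw [hflip p a t b, hflip q a t b, hW3 p b t a, hW3 q b t a, hflip t a p b, hflip t a q b]
      ring
    simp only [h1]
    have h3 : ∑ i : Fin N, ∑ j : Fin N, ∑ k : Fin N,
        (W i k j p + W i p j k) * (W i k j q + W i q j k) = ∑ t, ∑ a, ∑ b,
          (W a t b p + W a p b t) * (W a t b q + W a q b t) := by
      rw [Finset.sum_comm' (t' := Finset.univ) (s' := fun _ => Finset.univ) (by simp)]
      rw [Finset.sum_congr rfl fun j _ => Finset.sum_comm, Finset.sum_comm]
      exact Finset.sum_congr rfl fun t _ => Finset.sum_comm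
    rw [h3]
    simp only [← Finset.mul_sum]
    have hN' : (0:ℝ) < N := by exact_mod_cast hN1
    field_simp
    ring
end
end

section
/- For all p, q ∈ {1,…,N}: (i) ∫_{∂B₁} Σ_{i,j,k=1}^N ((∂_k H_{ij})(y))² y_p y_q dσ(y) = (2|S^{N−1}|/(N(N+2))) Σ_{i,j,k=1}^N (W_{ikjp}+W_{ipjk})(W_{ikjq}+W_{iqjk}) + (|S^{N−1}|/(N(N+2))) (Σ_{i,j,k,ℓ=1}^N (W_{ikjℓ}+W_{iℓjk})²) δ_{pq}; and (ii) ∫_{∂B₁} Σ_{i,j=1}^N (∂_p H_{ij})(y) (∂_q H_{ij})(y) dσ(y) = (|S^{N−1}|/N) Σ_{i,j,k=1}^N (W_{ikjp}+W_{ipjk})(W_{ikjq}+W_{iqjk}). -/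
open scoped BigOperators
open MeasureTheory

noncomputable section

/-- The action of a linear isometry on the unit sphere. -/
def sphMap (N : ℕ) (L : EuclideanSpace ℝ (Fin N) ≃ₗᵢ[ℝ] EuclideanSpace ℝ (Fin N))
    (y : Metric.sphere (0 : EuclideanSpace ℝ (Fin N)) 1) :
    Metric.sphere (0 : EuclideanSpace ℝ (Fin N)) 1 :=
  ⟨L y, by simp⟩

lemma sphMap_cont (N : ℕ) (L : EuclideanSpace ℝ (Fin N) ≃ₗᵢ[ℝ] EuclideanSpace ℝ (Fin N)) :
    Continuous (sphMap N L) := by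
  unfold sphMap
  exact Continuous.subtype_mk (L.continuous.comp continuous_subtype_val) _

lemma sphMap_mp (N : ℕ) (L : EuclideanSpace ℝ (Fin N) ≃ₗᵢ[ℝ] EuclideanSpace ℝ (Fin N)) :
    MeasurePreserving (sphMap N L) (sphereMeasure N) (sphereMeasure N) := by
  refine ⟨(sphMap_cont N L).measurable, ?_⟩
  ext s hs
  rw [Measure.map_apply (sphMap_cont N L).measurable hs]
  unfold sphereMeasure
  rw [Measure.toSphere_apply' _ hs,
    Measure.toSphere_apply' _ ((sphMap_cont N L).measurable hs)]
  congr 1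
  refine Eq.trans ?_ ((L.measurePreserving).measure_preimage_emb
    L.toHomeomorph.measurableEmbedding _)
  congr 1
  ext x
  simp only [Set.mem_smul, Set.mem_image, Set.mem_preimage]
  constructor
  · rintro ⟨r, hr, _, ⟨y, hy, rfl⟩, rfl⟩
    exact ⟨r, hr, _, ⟨_, hy, rfl⟩, by simp [sphMap]⟩
  · rintro ⟨r, hr, _, ⟨y, hy, rfl⟩, h⟩
    refine ⟨r, hr, _, ⟨sphMap N L.symm y, ?_, rfl⟩, ?_⟩
    · have : sphMap N L (sphMap N L.symm y) = y := by
        apply Subtype.ext; simp [sphMap]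
      rwa [this]
    · apply L.injective
      simp [sphMap, h]

instance sphereMeasure_finite (N : ℕ) : IsFiniteMeasure (sphereMeasure N) := by
  unfold sphereMeasure; infer_instance

lemma sph_integrable (N : ℕ) (f : Metric.sphere (0 : EuclideanSpace ℝ (Fin N)) 1 → ℝ)
    (hf : Continuous f) : Integrable f (sphereMeasure N) :=
  hf.integrable_of_hasCompactSupport (HasCompactSupport.of_compactSpace f)

/-- Fourth moment in direction `u`. -/
def F4 (N : ℕ) (u : EuclideanSpace ℝ (Fin N)) : ℝ :=
  ∫ y : Metric.sphere (0 : EuclideanSpace ℝ (Fin N)) 1,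
    (inner ℝ u (y : EuclideanSpace ℝ (Fin N))) ^ 4 ∂(sphereMeasure N)

lemma F4_norm (N : ℕ) (u v : EuclideanSpace ℝ (Fin N)) (h : ‖u‖ = ‖v‖) : F4 N u = F4 N v := by
  set L := Submodule.reflection (ℝ ∙ (u - v))ᗮ with hL
  have hLu : L u = v := Submodule.reflection_sub h
  have hmp := (sphMap_mp N L)
  have hemb : MeasurableEmbedding (sphMap N L) := by
    refine (sphMap_cont N L).measurableEmbedding ?_
    intro x y hxy
    have := congrArg Subtype.val hxy
    exact Subtype.ext (L.injective this)
  unfold F4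
  rw [← hmp.integral_comp hemb (fun y => (inner ℝ v (y : EuclideanSpace ℝ (Fin N))) ^ 4)]
  simp only [← hLu, sphMap, LinearIsometryEquiv.inner_map_map]

lemma F4_eq (N : ℕ) (a : Fin N) (u : EuclideanSpace ℝ (Fin N)) :
    F4 N u = F4 N (EuclideanSpace.single a 1) * (inner ℝ u u) ^ 2 := by
  rw [F4_norm N u (‖u‖ • EuclideanSpace.single a 1) (by simp [norm_smul])]
  unfold F4
  rw [← integral_mul_const]
  congr 1
  ext y
  rw [inner_smul_left, real_inner_self_eq_norm_sq]
  simp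
  ring

lemma moment_vec (N : ℕ) (e : Fin N) (a b c d : EuclideanSpace ℝ (Fin N)) :
    ∫ y : Metric.sphere (0 : EuclideanSpace ℝ (Fin N)) 1,
      inner ℝ a (y : EuclideanSpace ℝ (Fin N)) * inner ℝ b (y : EuclideanSpace ℝ (Fin N)) *
      inner ℝ c (y : EuclideanSpace ℝ (Fin N)) * inner ℝ d (y : EuclideanSpace ℝ (Fin N))
        ∂(sphereMeasure N)
    = F4 N (EuclideanSpace.single e 1) / 3 *
      (inner ℝ a b * inner ℝ c d + inner ℝ a c * inner ℝ b d + inner ℝ a d * inner ℝ b c) := by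
  have hi : ∀ u : EuclideanSpace ℝ (Fin N),
      Integrable (fun y : Metric.sphere (0 : EuclideanSpace ℝ (Fin N)) 1 =>
        (inner ℝ u (y : EuclideanSpace ℝ (Fin N))) ^ 4) (sphereMeasure N) := by
    intro u
    apply sph_integrable
    fun_prop
  have key : 192 * ∫ y : Metric.sphere (0 : EuclideanSpace ℝ (Fin N)) 1,
      inner ℝ a (y : EuclideanSpace ℝ (Fin N)) * inner ℝ b (y : EuclideanSpace ℝ (Fin N)) *
      inner ℝ c (y : EuclideanSpace ℝ (Fin N)) * inner ℝ d (y : EuclideanSpace ℝ (Fin N))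
        ∂(sphereMeasure N) =
      F4 N (a + b + c + d) - F4 N (a + b + c - d) - F4 N (a + b - c + d) + F4 N (a + b - c - d)
      - F4 N (a - b + c + d) + F4 N (a - b + c - d) + F4 N (a - b - c + d)
      - F4 N (a - b - c - d) := by
    unfold F4
    rw [← integral_const_mul]
    rw [← integral_sub, ← integral_sub, ← integral_add, ← integral_sub, ← integral_add,
      ← integral_add, ← integral_sub]
    · congr 1
      ext y
      simp only [inner_add_left, inner_sub_left]
      ring
    all_goals
      apply sph_integrable
      fun_prop
  simp only [F4_eq N e (_ + _), F4_eq N e (_ - _)] at key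
  simp only [inner_add_left, inner_sub_left, inner_add_right, inner_sub_right,
    real_inner_comm a b, real_inner_comm a c, real_inner_comm a d, real_inner_comm b c,
    real_inner_comm b d, real_inner_comm c d] at key ⊢
  linarith

/-- Real Kronecker delta. -/
def kd (N : ℕ) (a b : Fin N) : ℝ := if a = b then 1 else 0

lemma moment_coord (N : ℕ) (e a b c d : Fin N) :
    ∫ y : Metric.sphere (0 : EuclideanSpace ℝ (Fin N)) 1,
      (y : EuclideanSpace ℝ (Fin N)) a * (y : EuclideanSpace ℝ (Fin N)) b *
      (y : EuclideanSpace ℝ (Fin N)) c * (y : EuclideanSpace ℝ (Fin N)) d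
        ∂(sphereMeasure N)
    = F4 N (EuclideanSpace.single e 1) / 3 *
      (kd N a b * kd N c d + kd N a c * kd N b d + kd N a d * kd N b c) := by
  have h := moment_vec N e (EuclideanSpace.single a 1) (EuclideanSpace.single b 1)
    (EuclideanSpace.single c 1) (EuclideanSpace.single d 1)
  simpa [EuclideanSpace.inner_single_left, PiLp.single_apply, kd] using h

lemma sph_sum_sq (N : ℕ) (y : Metric.sphere (0 : EuclideanSpace ℝ (Fin N)) 1) :
    ∑ c, (y : EuclideanSpace ℝ (Fin N)) c * (y : EuclideanSpace ℝ (Fin N)) c = 1 := by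
  have h := EuclideanSpace.real_norm_sq_eq (y : EuclideanSpace ℝ (Fin N))
  simp only [norm_eq_of_mem_sphere] at h
  simp only [← pow_two]
  linarith

lemma moment2_aux (N : ℕ) (e a b : Fin N) :
    ∫ y : Metric.sphere (0 : EuclideanSpace ℝ (Fin N)) 1,
      (y : EuclideanSpace ℝ (Fin N)) a * (y : EuclideanSpace ℝ (Fin N)) b ∂(sphereMeasure N)
    = F4 N (EuclideanSpace.single e 1) / 3 * ((N + 2) * kd N a b) := by
  have h : ∀ y : Metric.sphere (0 : EuclideanSpace ℝ (Fin N)) 1,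
      (y : EuclideanSpace ℝ (Fin N)) a * (y : EuclideanSpace ℝ (Fin N)) b =
      ∑ c, (y : EuclideanSpace ℝ (Fin N)) a * (y : EuclideanSpace ℝ (Fin N)) b *
      (y : EuclideanSpace ℝ (Fin N)) c * (y : EuclideanSpace ℝ (Fin N)) c := by
    intro y
    simp only [mul_assoc, ← Finset.mul_sum, sph_sum_sq, mul_one]
  rw [integral_congr_ae (ae_of_all _ h)]
  rw [integral_finsetSum _ (fun c _ => sph_integrable N _ (by fun_prop))]
  simp only [moment_coord N e]
  rw [← Finset.mul_sum]
  congr 1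
  simp only [Finset.sum_add_distrib, kd]
  simp
  by_cases hab : a = b
  · simp [hab]; ring
  · simp [hab, Ne.symm hab]

lemma F4_val (N : ℕ) (e : Fin N) :
    F4 N (EuclideanSpace.single e 1) / 3 = sphereArea N / (N * (N + 2)) := by
  have hN : (N : ℝ) ≠ 0 := by
    have := e.pos
    positivity
  have h : ∫ y : Metric.sphere (0 : EuclideanSpace ℝ (Fin N)) 1,
      ∑ c, (y : EuclideanSpace ℝ (Fin N)) c * (y : EuclideanSpace ℝ (Fin N)) c
        ∂(sphereMeasure N) = sphereArea N := by
    simp only [sph_sum_sq]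
    simp [sphereArea, Measure.real]
  rw [integral_finsetSum _ (fun c _ => sph_integrable N _ (by fun_prop))] at h
  simp only [moment2_aux N e] at h
  simp [kd] at h
  have h2 : (N : ℝ) + 2 ≠ 0 := by positivity
  rw [eq_div_iff (by positivity)]
  linarith

lemma moment4 (N : ℕ) (a b c d : Fin N) :
    ∫ y : Metric.sphere (0 : EuclideanSpace ℝ (Fin N)) 1,
      (y : EuclideanSpace ℝ (Fin N)) a * (y : EuclideanSpace ℝ (Fin N)) b *
      (y : EuclideanSpace ℝ (Fin N)) c * (y : EuclideanSpace ℝ (Fin N)) d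
        ∂(sphereMeasure N)
    = sphereArea N / (N * (N + 2)) *
      (kd N a b * kd N c d + kd N a c * kd N b d + kd N a d * kd N b c) := by
  rw [moment_coord N a, F4_val]

lemma moment2 (N : ℕ) (a b : Fin N) :
    ∫ y : Metric.sphere (0 : EuclideanSpace ℝ (Fin N)) 1,
      (y : EuclideanSpace ℝ (Fin N)) a * (y : EuclideanSpace ℝ (Fin N)) b ∂(sphereMeasure N)
    = sphereArea N / N * kd N a b := by
  have hN : (N : ℝ) ≠ 0 := by
    have := a.pos
    positivity
  have h2 : (N : ℝ) + 2 ≠ 0 := by positivity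
  rw [moment2_aux N a, F4_val]
  field_simp

lemma pd_H (N : ℕ) (W : Fin N → Fin N → Fin N → Fin N → ℝ) (i j k : Fin N)
    (y : EuclideanSpace ℝ (Fin N)) :
    pd N k (Hmat N W i j) y = ∑ l, (W i k j l + W i l j k) * y l := by
  have hc : ∀ p : Fin N, HasFDerivAt (fun y : EuclideanSpace ℝ (Fin N) => y p)
      (EuclideanSpace.proj p : EuclideanSpace ℝ (Fin N) →L[ℝ] ℝ) y := fun p =>
    (EuclideanSpace.proj p : EuclideanSpace ℝ (Fin N) →L[ℝ] ℝ).hasFDerivAt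
  have h := HasFDerivAt.fun_sum (u := Finset.univ) (fun p (_ : p ∈ Finset.univ) =>
    HasFDerivAt.fun_sum (u := Finset.univ) (fun q (_ : q ∈ Finset.univ) =>
      ((hc p).const_mul (W i p j q)).mul (hc q)))
  have h' : HasFDerivAt (Hmat N W i j) _ y := h
  unfold pd
  rw [h'.fderiv]
  simp [PiLp.single_apply, Finset.sum_add_distrib, add_mul]
  rw [add_comm]
  simp only [mul_comm]

lemma quad_int (N : ℕ) (B : Fin N → Fin N → ℝ) (p q : Fin N) :
    ∫ y : Metric.sphere (0 : EuclideanSpace ℝ (Fin N)) 1,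
      (∑ l, ∑ m, B l m * ((y : EuclideanSpace ℝ (Fin N)) l * (y : EuclideanSpace ℝ (Fin N)) m))
      * (y : EuclideanSpace ℝ (Fin N)) p * (y : EuclideanSpace ℝ (Fin N)) q ∂(sphereMeasure N)
    = sphereArea N / (N * (N + 2)) * (B p q + B q p + (∑ l, B l l) * kd N p q) := by
  have h : ∀ y : Metric.sphere (0 : EuclideanSpace ℝ (Fin N)) 1,
      (∑ l, ∑ m, B l m * ((y : EuclideanSpace ℝ (Fin N)) l * (y : EuclideanSpace ℝ (Fin N)) m))
      * (y : EuclideanSpace ℝ (Fin N)) p * (y : EuclideanSpace ℝ (Fin N)) q =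
      ∑ l, ∑ m, B l m * ((y : EuclideanSpace ℝ (Fin N)) l * (y : EuclideanSpace ℝ (Fin N)) m
      * (y : EuclideanSpace ℝ (Fin N)) p * (y : EuclideanSpace ℝ (Fin N)) q) := by
    intro y
    simp only [Finset.sum_mul, mul_assoc]
  rw [integral_congr_ae (ae_of_all _ h)]
  rw [integral_finsetSum _ (fun c _ => sph_integrable N _ (by fun_prop))]
  have : ∀ l, ∫ y : Metric.sphere (0 : EuclideanSpace ℝ (Fin N)) 1,
      ∑ m, B l m * ((y : EuclideanSpace ℝ (Fin N)) l * (y : EuclideanSpace ℝ (Fin N)) m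
      * (y : EuclideanSpace ℝ (Fin N)) p * (y : EuclideanSpace ℝ (Fin N)) q) ∂(sphereMeasure N)
      = ∑ m, B l m * (sphereArea N / (N * (N + 2)) *
      (kd N l m * kd N p q + kd N l p * kd N m q + kd N l q * kd N m p)) := by
    intro l
    rw [integral_finsetSum _ (fun c _ => sph_integrable N _ (by fun_prop))]
    simp only [integral_const_mul, moment4]
  rw [Finset.sum_congr rfl (fun l _ => this l)]
  simp only [mul_left_comm (B _ _), ← Finset.mul_sum]
  congr 1
  simp only [mul_add, Finset.sum_add_distrib, ← mul_assoc, ← Finset.sum_mul]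
  simp [kd]
  ring

lemma quad_int2 (N : ℕ) (B : Fin N → Fin N → ℝ) :
    ∫ y : Metric.sphere (0 : EuclideanSpace ℝ (Fin N)) 1,
      (∑ l, ∑ m, B l m * ((y : EuclideanSpace ℝ (Fin N)) l * (y : EuclideanSpace ℝ (Fin N)) m))
      ∂(sphereMeasure N)
    = sphereArea N / N * ∑ l, B l l := by
  rw [integral_finsetSum _ (fun c _ => sph_integrable N _ (by fun_prop))]
  have : ∀ l, ∫ y : Metric.sphere (0 : EuclideanSpace ℝ (Fin N)) 1,
      ∑ m, B l m * ((y : EuclideanSpace ℝ (Fin N)) l * (y : EuclideanSpace ℝ (Fin N)) m)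
        ∂(sphereMeasure N)
      = ∑ m, B l m * (sphereArea N / N * kd N l m) := by
    intro l
    rw [integral_finsetSum _ (fun c _ => sph_integrable N _ (by fun_prop))]
    simp only [integral_const_mul, moment2]
  rw [Finset.sum_congr rfl (fun l _ => this l)]
  simp only [mul_left_comm (B _ _), ← Finset.mul_sum]
  simp [kd]

lemma swap3 {N : ℕ} (f : Fin N → Fin N → Fin N → ℝ) :
    ∑ i, ∑ l, ∑ m, f i l m = ∑ l, ∑ m, ∑ i, f i l m := by
  rw [Finset.sum_comm]
  exact Finset.sum_congr rfl fun l _ => Finset.sum_comm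

lemma swap4 {N : ℕ} (f : Fin N → Fin N → Fin N → Fin N → ℝ) :
    ∑ i, ∑ j, ∑ l, ∑ m, f i j l m = ∑ l, ∑ m, ∑ i, ∑ j, f i j l m :=
  (Finset.sum_congr rfl fun i _ => swap3 (f i)).trans (swap3 fun i l m => ∑ j, f i j l m)

lemma swap5 {N : ℕ} (f : Fin N → Fin N → Fin N → Fin N → Fin N → ℝ) :
    ∑ i, ∑ j, ∑ k, ∑ l, ∑ m, f i j k l m = ∑ l, ∑ m, ∑ i, ∑ j, ∑ k, f i j k l m :=
  (Finset.sum_congr rfl fun i _ => swap4 (f i)).trans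
    (swap3 fun i l m => ∑ j, ∑ k, f i j k l m)

theorem stmt_6 (N : ℕ) (hN : 5 ≤ N)
    (W : Fin N → Fin N → Fin N → Fin N → ℝ)
    (hW1 : ∀ i p j q, W i p j q = - W p i j q)
    (hW2 : ∀ i p j q, W i p j q = - W i p q j)
    (hW3 : ∀ i p j q, W i p j q = W j q i p)
    (hBianchi : ∀ i p j q, W i p j q + W i j q p + W i q p j = 0)
    (hTrace : ∀ p q, ∑ i : Fin N, W i p i q = 0) :
    ∀ p q : Fin N,
    (∫ y : Metric.sphere (0 : EuclideanSpace ℝ (Fin N)) 1,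
        (∑ i : Fin N, ∑ j : Fin N, ∑ k : Fin N, (pd N k (Hmat N W i j) ↑y) ^ 2)
          * ((y : EuclideanSpace ℝ (Fin N)) p) * ((y : EuclideanSpace ℝ (Fin N)) q)
          ∂(sphereMeasure N)
      = 2 * sphereArea N / (N * (N + 2))
          * (∑ i : Fin N, ∑ j : Fin N, ∑ k : Fin N,
              (W i k j p + W i p j k) * (W i k j q + W i q j k))
        + sphereArea N / (N * (N + 2))
          * (∑ i : Fin N, ∑ j : Fin N, ∑ k : Fin N, ∑ l : Fin N,
              (W i k j l + W i l j k) ^ 2)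
          * (if p = q then (1 : ℝ) else 0)) ∧
    (∫ y : Metric.sphere (0 : EuclideanSpace ℝ (Fin N)) 1,
        (∑ i : Fin N, ∑ j : Fin N,
          pd N p (Hmat N W i j) ↑y * pd N q (Hmat N W i j) ↑y) ∂(sphereMeasure N)
      = sphereArea N / N
          * ∑ i : Fin N, ∑ j : Fin N, ∑ k : Fin N,
              (W i k j p + W i p j k) * (W i k j q + W i q j k)) := by
  intro p q
  constructor
  · have h : ∀ y : Metric.sphere (0 : EuclideanSpace ℝ (Fin N)) 1,
        (∑ i : Fin N, ∑ j : Fin N, ∑ k : Fin N,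
          (pd N k (Hmat N W i j) (y : EuclideanSpace ℝ (Fin N))) ^ 2) =
        ∑ l, ∑ m, (∑ i, ∑ j, ∑ k, (W i k j l + W i l j k) * (W i k j m + W i m j k)) *
          ((y : EuclideanSpace ℝ (Fin N)) l * (y : EuclideanSpace ℝ (Fin N)) m) := by
      intro y
      have e : ∀ i j k, (pd N k (Hmat N W i j) (y : EuclideanSpace ℝ (Fin N))) ^ 2 =
          ∑ l, ∑ m, (W i k j l + W i l j k) * (W i k j m + W i m j k) *
          ((y : EuclideanSpace ℝ (Fin N)) l * (y : EuclideanSpace ℝ (Fin N)) m) := by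
        intro i j k
        rw [pd_H, pow_two, Finset.sum_mul_sum]
        refine Finset.sum_congr rfl fun l _ => Finset.sum_congr rfl fun m _ => by ring
      simp only [e, Finset.sum_mul]
      exact swap5 _
    simp only [h]
    rw [quad_int N (fun l m => ∑ i, ∑ j, ∑ k,
      (W i k j l + W i l j k) * (W i k j m + W i m j k)) p q]
    have hs : ∑ i, ∑ j, ∑ k, (W i k j q + W i q j k) * (W i k j p + W i p j k) =
        ∑ i, ∑ j, ∑ k, (W i k j p + W i p j k) * (W i k j q + W i q j k) := by
      simp only [mul_comm]
    have ht : ∑ l, ∑ i, ∑ j, ∑ k, (W i k j l + W i l j k) * (W i k j l + W i l j k) =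
        ∑ i, ∑ j, ∑ k, ∑ l, (W i k j l + W i l j k) ^ 2 := by
      rw [Finset.sum_comm]
      refine Finset.sum_congr rfl fun i _ => ?_
      rw [Finset.sum_comm]
      refine Finset.sum_congr rfl fun j _ => ?_
      rw [Finset.sum_comm]
      simp only [pow_two]
    simp only [hs, ht, kd]
    ring
  · have h : ∀ y : Metric.sphere (0 : EuclideanSpace ℝ (Fin N)) 1,
        (∑ i : Fin N, ∑ j : Fin N,
          pd N p (Hmat N W i j) (y : EuclideanSpace ℝ (Fin N)) *
          pd N q (Hmat N W i j) (y : EuclideanSpace ℝ (Fin N))) =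
        ∑ l, ∑ m, (∑ i, ∑ j, (W i p j l + W i l j p) * (W i q j m + W i m j q)) *
          ((y : EuclideanSpace ℝ (Fin N)) l * (y : EuclideanSpace ℝ (Fin N)) m) := by
      intro y
      have e : ∀ i j, pd N p (Hmat N W i j) (y : EuclideanSpace ℝ (Fin N)) *
          pd N q (Hmat N W i j) (y : EuclideanSpace ℝ (Fin N)) =
          ∑ l, ∑ m, (W i p j l + W i l j p) * (W i q j m + W i m j q) *
          ((y : EuclideanSpace ℝ (Fin N)) l * (y : EuclideanSpace ℝ (Fin N)) m) := by
        intro i j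
        rw [pd_H, pd_H, Finset.sum_mul_sum]
        refine Finset.sum_congr rfl fun l _ => Finset.sum_congr rfl fun m _ => by ring
      simp only [e, Finset.sum_mul]
      exact swap4 _
    simp only [h]
    rw [quad_int2 N (fun l m => ∑ i, ∑ j, (W i p j l + W i l j p) * (W i q j m + W i m j q))]
    congr 1
    rw [Finset.sum_comm]
    refine Finset.sum_congr rfl fun i _ => ?_
    rw [Finset.sum_comm]
    refine Finset.sum_congr rfl fun j _ => Finset.sum_congr rfl fun k _ => ?_
    ring
end
end

section
/- Let N ≥ 1 be an integer and let s, t be real numbers with 0 < s < N and t > s. Then there exists a constant C > 0 (depending only on N, s, t) such that for every x ∈ ℝ^N: if t < N then ∫_{ℝ^N} |x−y|^{s−N} (1+|y|)^{−t} dy ≤ C (1+|x|)^{s−t}; if t = N then ∫_{ℝ^N} |x−y|^{s−N} (1+|y|)^{−t} dy ≤ C (1+|x|)^{s−N} (1 + log(1+|x|)); and if t > N then ∫_{ℝ^N} |x−y|^{s−N} (1+|y|)^{−t} dy ≤ C (1+|x|)^{s−N}. -/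
open scoped BigOperators
open MeasureTheory

lemma aux_radial (N : ℕ) (hN : 1 ≤ N) (F G : ℝ → ℝ) (hF : Measurable F)
    (h0 : ∀ r, 0 < r → 0 ≤ F r) (hFG : ∀ r, 0 < r → r ^ ((N : ℝ) - 1) * F r ≤ G r)
    (hG : IntegrableOn G (Set.Ioi 0)) :
    Integrable (fun y : EuclideanSpace ℝ (Fin N) => F ‖y‖) ∧
    (∫ y : EuclideanSpace ℝ (Fin N), F ‖y‖) ≤
      (N * (volume : Measure (EuclideanSpace ℝ (Fin N))).real (Metric.ball 0 1)) *
        ∫ r in Set.Ioi (0 : ℝ), G r := by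
  have : Nonempty (Fin N) := ⟨⟨0, hN⟩⟩
  have : Nontrivial (EuclideanSpace ℝ (Fin N)) := inferInstance
  have hpow : ∀ r : ℝ, r ^ (N - 1) = r ^ ((N : ℝ) - 1) := by
    intro r
    rw [← Real.rpow_natCast, Nat.cast_sub hN, Nat.cast_one]
  have hI : IntegrableOn (fun r : ℝ => r ^ (N - 1) * F r) (Set.Ioi 0) := by
    refine Integrable.mono' hG (by fun_prop) ?_
    refine (ae_restrict_iff' measurableSet_Ioi).2 (Filter.Eventually.of_forall fun r hr => ?_)
    have hr' : 0 < r := hr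
    rw [Real.norm_of_nonneg (mul_nonneg (by positivity) (h0 r hr')), hpow]
    exact hFG r hr'
  constructor
  · rw [integrable_fun_norm_addHaar volume (f := F)]
    simpa using hI
  · rw [integral_fun_norm_addHaar volume F]
    simp only [finrank_euclideanSpace, Fintype.card_fin, smul_eq_mul, nsmul_eq_mul]
    rw [← mul_assoc]
    refine mul_le_mul_of_nonneg_left ?_ (by positivity)
    refine setIntegral_mono_on hI hG measurableSet_Ioi fun r hr => ?_
    rw [hpow]
    exact hFG r hr

lemma aux_near (ρ s : ℝ) (hs : 0 < s) (hρ : 0 < ρ) :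
    IntegrableOn ((Set.Iic ρ).indicator fun r : ℝ => r ^ (s - 1)) (Set.Ioi 0) ∧
    (∫ r in Set.Ioi (0 : ℝ), (Set.Iic ρ).indicator (fun r : ℝ => r ^ (s - 1)) r) = ρ ^ s / s := by
  have hi : IntervalIntegrable (fun r : ℝ => r ^ (s - 1)) volume 0 ρ :=
    intervalIntegral.intervalIntegrable_rpow' (by linarith)
  constructor
  · rw [IntegrableOn, integrable_indicator_iff measurableSet_Iic, IntegrableOn,
      Measure.restrict_restrict measurableSet_Iic, Set.inter_comm, Set.Ioi_inter_Iic]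
    exact (intervalIntegrable_iff_integrableOn_Ioc_of_le hρ.le).1 hi
  · rw [integral_indicator measurableSet_Iic,
      Measure.restrict_restrict measurableSet_Iic, Set.inter_comm, Set.Ioi_inter_Iic,
      ← intervalIntegral.integral_of_le hρ.le, integral_rpow (Or.inl (by linarith))]
    simp [Real.zero_rpow hs.ne']

lemma aux_mid (R p : ℝ) (hR : 1 ≤ R) :
    IntegrableOn ((Set.Iic (R - 1)).indicator fun r : ℝ => (r + 1) ^ p) (Set.Ioi 0) ∧
    (∫ r in Set.Ioi (0 : ℝ), (Set.Iic (R - 1)).indicator (fun r : ℝ => (r + 1) ^ p) r)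
      = ∫ r in (1 : ℝ)..R, r ^ p := by
  have h0 : (0 : ℝ) ≤ R - 1 := by linarith
  have hi : IntervalIntegrable (fun r : ℝ => (r + 1) ^ p) volume 0 (R - 1) := by
    apply ContinuousOn.intervalIntegrable
    intro r hr
    rw [Set.uIcc_of_le h0] at hr
    have : r + 1 ≠ 0 := by linarith [hr.1]
    have hc : ContinuousAt (fun r : ℝ => r + 1) r := by fun_prop
    exact (hc.rpow_const (Or.inl this)).continuousWithinAt
  constructor
  · rw [IntegrableOn, integrable_indicator_iff measurableSet_Iic, IntegrableOn,
      Measure.restrict_restrict measurableSet_Iic, Set.inter_comm, Set.Ioi_inter_Iic]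
    exact (intervalIntegrable_iff_integrableOn_Ioc_of_le h0).1 hi
  · rw [integral_indicator measurableSet_Iic,
      Measure.restrict_restrict measurableSet_Iic, Set.inter_comm, Set.Ioi_inter_Iic,
      ← intervalIntegral.integral_of_le h0,
      intervalIntegral.integral_comp_add_right (fun r : ℝ => r ^ p)]
    simp

lemma aux_far (R p : ℝ) (hR : 1 ≤ R) (hp : 0 < p) :
    IntegrableOn ((Set.Ioi (R - 1)).indicator fun r : ℝ => (r + 1) ^ (-p - 1)) (Set.Ioi 0) ∧
    (∫ r in Set.Ioi (0 : ℝ), (Set.Ioi (R - 1)).indicator (fun r : ℝ => (r + 1) ^ (-p - 1)) r)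
      = R ^ (-p) / p := by
  have h0 : (0 : ℝ) ≤ R - 1 := by linarith
  have hi : IntegrableOn (fun r : ℝ => (r + 1) ^ (-p - 1)) (Set.Ioi (R - 1)) :=
    integrableOn_add_rpow_Ioi_of_lt (by linarith) (by linarith)
  have hsub : Set.Ioi (R - 1) ∩ Set.Ioi 0 = Set.Ioi (R - 1) := by
    rw [Set.Ioi_inter_Ioi, sup_eq_left.2 h0]
  constructor
  · rw [IntegrableOn, integrable_indicator_iff measurableSet_Ioi, IntegrableOn,
      Measure.restrict_restrict measurableSet_Ioi, hsub]
    exact hi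
  · rw [integral_indicator measurableSet_Ioi,
      Measure.restrict_restrict measurableSet_Ioi, hsub, ← integral_indicator measurableSet_Ioi]
    have := integral_add_right_eq_self (μ := (volume : Measure ℝ))
      ((Set.Ioi R).indicator (fun r : ℝ => r ^ (-p - 1))) 1
    rw [integral_indicator measurableSet_Ioi,
      integral_Ioi_rpow_of_lt (by linarith) (by linarith)] at this
    have e : -R ^ (-p - 1 + 1) / (-p - 1 + 1) = R ^ (-p) / p := by
      rw [sub_add_cancel, neg_div_neg_eq]
    rw [← e, ← this]
    congr 1
    ext r
    simp only [Set.indicator, Set.mem_Ioi, sub_lt_iff_lt_add]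

lemma aux_main (N : ℕ) (hN : 1 ≤ N) (s t : ℝ)
    (hs : 0 < s) (hsN : s < N) (hts : s < t) :
    ∃ A B : ℝ, 0 ≤ A ∧ 0 ≤ B ∧ ∀ x : EuclideanSpace ℝ (Fin N),
      (∫ y : EuclideanSpace ℝ (Fin N), ‖x - y‖ ^ (s - N) * (1 + ‖y‖) ^ (-t)) ≤
        A * (1 + ‖x‖) ^ (s - t) +
        B * ((1 + ‖x‖) ^ (s - N) * ∫ r in (1 : ℝ)..(1 + ‖x‖), r ^ ((N : ℝ) - 1 - t)) := by
  set K : ℝ := N * (volume : Measure (EuclideanSpace ℝ (Fin N))).real (Metric.ball 0 1) with hK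
  have hK0 : 0 ≤ K := by positivity
  have hts' : 0 < t - s := by linarith
  refine ⟨(1 / 2) ^ (-t) * (K * ((1 / 2) ^ s / s)) + (1 / 3) ^ (s - N) * (K * (1 / (t - s))),
    (1 / 2) ^ (s - N) * K, by positivity, by positivity, fun x => ?_⟩
  set R : ℝ := 1 + ‖x‖ with hRdef
  have hR : 1 ≤ R := by simp [hRdef]
  have hR0 : 0 < R := by linarith
  have ht : 0 < t := by linarith
  obtain ⟨n1, n2⟩ := aux_near (1 / 2 * R) s hs (by positivity)
  obtain ⟨m1, m2⟩ := aux_mid R ((N : ℝ) - 1 - t) hR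
  obtain ⟨f1, f2⟩ := aux_far R (t - s) hR hts'
  obtain ⟨a1, a2⟩ := aux_radial N hN ((Set.Iic (1 / 2 * R)).indicator fun r : ℝ => r ^ (s - N)) _
    (Measurable.indicator (by fun_prop) measurableSet_Iic)
    (fun r hr => Set.indicator_apply_nonneg fun _ => by positivity) (fun r hr => by
      simp only [Set.indicator]
      split_ifs
      · rw [← Real.rpow_add hr]
        apply le_of_eq
        congr 1
        ring
      · simp) n1
  have key : ∀ r q : ℝ, 0 < r → r ^ ((N : ℝ) - 1) * (r + 1) ^ q ≤ (r + 1) ^ ((N : ℝ) - 1 + q) := by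
    intro r q hr
    rw [Real.rpow_add (by linarith)]
    have : (1 : ℝ) ≤ N := by exact_mod_cast hN
    gcongr
    linarith
  obtain ⟨b1, b2⟩ := aux_radial N hN
    ((Set.Iic (R - 1)).indicator fun r : ℝ => (r + 1) ^ (-t)) _
    (Measurable.indicator (by fun_prop) measurableSet_Iic)
    (fun r hr => Set.indicator_apply_nonneg fun _ => by positivity) (fun r hr => by
      simp only [Set.indicator]
      split_ifs
      · exact (key r _ hr).trans_eq (by congr 1)
      · simp) m1
  obtain ⟨c1, c2⟩ := aux_radial N hN
    ((Set.Ioi (R - 1)).indicator fun r : ℝ => (r + 1) ^ (s - N - t)) _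
    (Measurable.indicator (by fun_prop) measurableSet_Ioi)
    (fun r hr => Set.indicator_apply_nonneg fun _ => by positivity) (fun r hr => by
      simp only [Set.indicator]
      split_ifs
      · exact (key r _ hr).trans_eq (by congr 1; ring)
      · simp) f1
  rw [n2, ← hK] at a2
  rw [m2, ← hK] at b2
  rw [f2, ← hK] at c2
  set F1 := (Set.Iic (1 / 2 * R)).indicator fun r : ℝ => r ^ (s - N) with hF1
  set F2 := (Set.Iic (R - 1)).indicator fun r : ℝ => (r + 1) ^ (-t) with hF2
  set F3 := (Set.Ioi (R - 1)).indicator fun r : ℝ => (r + 1) ^ (s - N - t) with hF3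
  have a1' : Integrable (fun y : EuclideanSpace ℝ (Fin N) => F1 ‖x - y‖) :=
    a1.comp_sub_left x
  have a2' : (∫ y : EuclideanSpace ℝ (Fin N), F1 ‖x - y‖) = ∫ y : EuclideanSpace ℝ (Fin N), F1 ‖y‖ :=
    integral_sub_left_eq_self (fun y : EuclideanSpace ℝ (Fin N) => F1 ‖y‖) volume x
  have hg1 := a1'.const_mul ((1 / 2 * R) ^ (-t))
  have hg2 := b1.const_mul ((1 / 2 * R) ^ (s - N))
  have hg3 := c1.const_mul ((1 / 3) ^ (s - N))
  have F1nn : ∀ r, 0 ≤ r → 0 ≤ F1 r := fun r hr => Set.indicator_apply_nonneg fun _ => by positivity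
  have F2nn : ∀ r, 0 ≤ r → 0 ≤ F2 r := fun r hr => Set.indicator_apply_nonneg fun _ => by positivity
  have F3nn : ∀ r, 0 ≤ r → 0 ≤ F3 r := fun r hr => Set.indicator_apply_nonneg fun _ => by positivity
  have bound : ∀ y : EuclideanSpace ℝ (Fin N), ‖x - y‖ ^ (s - N) * (1 + ‖y‖) ^ (-t) ≤
      (1 / 2 * R) ^ (-t) * F1 ‖x - y‖ + (1 / 2 * R) ^ (s - N) * F2 ‖y‖
        + (1 / 3) ^ (s - N) * F3 ‖y‖ := by
    intro y
    have t1 : ‖x‖ ≤ ‖x - y‖ + ‖y‖ := by simpa using norm_add_le (x - y) y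
    have t2 : ‖y‖ ≤ ‖x - y‖ + ‖x‖ := by
      have := norm_sub_le x (x - y)
      rw [sub_sub_cancel] at this
      linarith
    have p1 := mul_nonneg (by positivity : 0 ≤ (1 / 2 * R) ^ (-t)) (F1nn _ (norm_nonneg (x - y)))
    have p2 := mul_nonneg (by positivity : 0 ≤ (1 / 2 * R) ^ (s - N)) (F2nn _ (norm_nonneg y))
    have p3 := mul_nonneg (by positivity : (0 : ℝ) ≤ (1 / 3) ^ (s - N)) (F3nn _ (norm_nonneg y))
    have hy := norm_nonneg y
    by_cases h1 : ‖x - y‖ ≤ 1 / 2 * R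
    · have e : F1 ‖x - y‖ = ‖x - y‖ ^ (s - N) := Set.indicator_of_mem (s := Set.Iic (1 / 2 * R)) h1 _
      have : (1 + ‖y‖) ^ (-t) ≤ (1 / 2 * R) ^ (-t) :=
        Real.rpow_le_rpow_of_nonpos (by positivity) (by linarith) (by linarith)
      have := mul_le_mul_of_nonneg_left this (by positivity : 0 ≤ ‖x - y‖ ^ (s - N))
      rw [← e] at this ⊢
      linarith
    push Not at h1
    by_cases h2 : ‖y‖ ≤ R - 1
    · have e : F2 ‖y‖ = (‖y‖ + 1) ^ (-t) := Set.indicator_of_mem (s := Set.Iic (R - 1)) h2 _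
      have : ‖x - y‖ ^ (s - N) ≤ (1 / 2 * R) ^ (s - N) :=
        Real.rpow_le_rpow_of_nonpos (by positivity) (by linarith) (by linarith)
      have := mul_le_mul_of_nonneg_right this (by positivity : 0 ≤ (‖y‖ + 1) ^ (-t))
      rw [← e] at this
      rw [add_comm 1 ‖y‖, ← e]
      linarith
    · push Not at h2
      have e : F3 ‖y‖ = (‖y‖ + 1) ^ (s - N - t) :=
        Set.indicator_of_mem (s := Set.Ioi (R - 1)) h2 _
      have : ‖x - y‖ ^ (s - N) ≤ (1 / 3 * (‖y‖ + 1)) ^ (s - N) :=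
        Real.rpow_le_rpow_of_nonpos (by positivity) (by linarith) (by linarith)
      have := mul_le_mul_of_nonneg_right this (by positivity : 0 ≤ (‖y‖ + 1) ^ (-t))
      rw [Real.mul_rpow (by norm_num) (by positivity), mul_assoc, ← Real.rpow_add (by positivity),
        ← sub_eq_add_neg, ← e] at this
      rw [add_comm 1 ‖y‖]
      linarith
  have hle := integral_mono_of_nonneg (μ := volume)
    (f := fun y : EuclideanSpace ℝ (Fin N) => ‖x - y‖ ^ (s - N) * (1 + ‖y‖) ^ (-t))
    (Filter.Eventually.of_forall fun y => by positivity)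
    ((hg1.add hg2).add hg3) (Filter.Eventually.of_forall bound)
  refine hle.trans ?_
  rw [integral_add' (hg1.add hg2) hg3, integral_add' hg1 hg2, integral_const_mul,
    integral_const_mul, integral_const_mul, a2']
  have q1 := mul_le_mul_of_nonneg_left a2 (by positivity : 0 ≤ (1 / 2 * R) ^ (-t))
  have q2 := mul_le_mul_of_nonneg_left b2 (by positivity : 0 ≤ (1 / 2 * R) ^ (s - N))
  have q3 := mul_le_mul_of_nonneg_left c2 (by positivity : (0 : ℝ) ≤ (1 / 3) ^ (s - N))
  refine (add_le_add (add_le_add q1 q2) q3).trans_eq ?_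
  rw [Real.mul_rpow (by norm_num) hR0.le, Real.mul_rpow (by norm_num) hR0.le,
    Real.mul_rpow (by norm_num) hR0.le, neg_sub, sub_eq_add_neg s t, Real.rpow_add hR0]
  ring

theorem stmt_8 (N : ℕ) (hN : 1 ≤ N) (s t : ℝ)
    (hs : 0 < s) (hsN : s < N) (hts : s < t) :
    ∃ C : ℝ, 0 < C ∧ ∀ x : EuclideanSpace ℝ (Fin N),
      ((t < N →
        (∫ y : EuclideanSpace ℝ (Fin N),
            ‖x - y‖ ^ (s - N) * (1 + ‖y‖) ^ (-t))
          ≤ C * (1 + ‖x‖) ^ (s - t)) ∧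
      (t = N →
        (∫ y : EuclideanSpace ℝ (Fin N),
            ‖x - y‖ ^ (s - N) * (1 + ‖y‖) ^ (-t))
          ≤ C * (1 + ‖x‖) ^ (s - N) * (1 + Real.log (1 + ‖x‖))) ∧
      ((N : ℝ) < t →
        (∫ y : EuclideanSpace ℝ (Fin N),
            ‖x - y‖ ^ (s - N) * (1 + ‖y‖) ^ (-t))
          ≤ C * (1 + ‖x‖) ^ (s - N))) := by
  obtain ⟨A, B, hA, hB, h⟩ := aux_main N hN s t hs hsN hts
  refine ⟨A + B + B / |(N : ℝ) - t| + 1, by positivity, fun x => ?_⟩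
  have hx := h x
  set R : ℝ := 1 + ‖x‖ with hRdef
  have hR : 1 ≤ R := by simp [hRdef]
  have hR0 : 0 < R := by linarith
  have hnot : (0 : ℝ) ∉ Set.uIcc 1 R := by
    rw [Set.uIcc_of_le hR]
    intro h
    linarith [h.1]
  refine ⟨fun htN => hx.trans ?_, fun htN => hx.trans ?_, fun htN => hx.trans ?_⟩
  · have hd : 0 < (N : ℝ) - t := by linarith
    rw [integral_rpow (Or.inl (by linarith)), abs_of_pos hd, Real.one_rpow,
      show (N : ℝ) - 1 - t + 1 = N - t by ring]
    have e : R ^ (s - N) * R ^ ((N : ℝ) - t) = R ^ (s - t) := by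
      rw [← Real.rpow_add hR0]
      congr 1
      ring
    have : R ^ (s - N) * ((R ^ ((N : ℝ) - t) - 1) / (N - t)) ≤ R ^ (s - t) / (N - t) := by
      rw [← e, ← mul_div_assoc]
      gcongr
      linarith
    have h2 := mul_le_mul_of_nonneg_left this hB
    have h3 : 0 ≤ B * R ^ (s - t) := by positivity
    have h4 : 0 ≤ R ^ (s - t) := by positivity
    have h5 : B * (R ^ (s - t) / (N - t)) = B / (N - t) * R ^ (s - t) := by ring
    linarith
  · subst htN
    have hl : 0 ≤ Real.log R := Real.log_nonneg hR
    have : (∫ r in (1 : ℝ)..R, r ^ ((N : ℝ) - 1 - N)) = Real.log R := by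
      rw [show (N : ℝ) - 1 - N = -1 by ring]
      simp only [Real.rpow_neg_one]
      rw [integral_inv hnot, div_one]
    rw [this]
    have h4 : 0 ≤ R ^ (s - N) := by positivity
    have h5 : 0 ≤ B / |(N : ℝ) - N| := by positivity
    nlinarith [mul_nonneg h4 hl, mul_nonneg hA (mul_nonneg h4 hl), mul_nonneg hB h4,
      mul_nonneg h5 h4, mul_nonneg h5 (mul_nonneg h4 hl)]
  · have hd : 0 < t - (N : ℝ) := by linarith
    rw [integral_rpow (Or.inr ⟨by linarith, hnot⟩), abs_sub_comm, abs_of_pos hd, Real.one_rpow,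
      show (N : ℝ) - 1 - t + 1 = -(t - N) by ring]
    have h1 : R ^ (s - t) ≤ R ^ (s - N) := Real.rpow_le_rpow_of_exponent_le hR (by linarith)
    have h2 : (R ^ (-(t - (N : ℝ))) - 1) / (-(t - N)) ≤ 1 / (t - N) := by
      rw [div_neg, ← neg_div]
      have : 0 ≤ R ^ (-(t - (N : ℝ))) := by positivity
      gcongr
      linarith
    have h4 : 0 ≤ R ^ (s - N) := by positivity
    have h3 := mul_le_mul_of_nonneg_left (mul_le_mul_of_nonneg_left h2 h4) hB
    have h5 : B * (R ^ (s - N) * (1 / (t - N))) = B / (t - N) * R ^ (s - N) := by ring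
    have h6 := mul_le_mul_of_nonneg_left h1 hA
    have h7 := mul_nonneg hB h4
    linarith
end

section
/- Let N ≥ 1 be an integer and let s, k be real numbers with 0 < s < N, 0 < k < N and s + k < N. Then there exists a constant C > 0 (depending only on N, s, k) such that for every r ≥ 1 and every y ∈ ℝ^N: ∫_{B_r} |y−z|^{s−N} (1+|z|)^{k−N} dz ≤ C r^k (1+|y|)^{s−N}, where B_r = {z ∈ ℝ^N : |z| < r} is the ball of radius r centered at the origin. -/
open scoped BigOperators
open MeasureTheory

theorem rad (N : ℕ) (hN : 1 ≤ N) (a : ℝ) (ha : 0 < a) :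
    ∃ A : ℝ, 0 < A ∧ ∀ R : ℝ, 0 < R →
      Integrable (fun x : EuclideanSpace ℝ (Fin N) =>
        (Set.Iio R).indicator (fun t : ℝ => t ^ (a - N)) ‖x‖) ∧
      ∫ x : EuclideanSpace ℝ (Fin N), (Set.Iio R).indicator (fun t : ℝ => t ^ (a - N)) ‖x‖
        = A * R ^ a := by
  haveI : Nonempty (Fin N) := ⟨⟨0, hN⟩⟩
  haveI : Nontrivial (EuclideanSpace ℝ (Fin N)) := inferInstance
  have hfr : Module.finrank ℝ (EuclideanSpace ℝ (Fin N)) = N := by simp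
  have hb : 0 < volume.real (Metric.ball (0 : EuclideanSpace ℝ (Fin N)) 1) := by
    rw [Measure.real, ENNReal.toReal_pos_iff]
    exact ⟨Metric.measure_ball_pos _ _ one_pos, measure_ball_lt_top⟩
  have hN0 : (0:ℝ) < N := by exact_mod_cast hN
  refine ⟨N * volume.real (Metric.ball (0 : EuclideanSpace ℝ (Fin N)) 1) / a, by positivity, ?_⟩
  intro R hR
  have key : Set.EqOn (fun y : ℝ => y ^ (N - 1) • (Set.Iio R).indicator (fun t : ℝ => t ^ (a - N)) y)
      ((Set.Iio R).indicator (fun t : ℝ => t ^ (a - 1))) (Set.Ioi 0) := by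
    intro y hy
    have hy : 0 < y := hy
    by_cases h : y ∈ Set.Iio R
    · simp only [Set.indicator_of_mem h, smul_eq_mul]
      rw [← Real.rpow_natCast, ← Real.rpow_add hy]
      congr 1
      push_cast [Nat.cast_sub hN]; ring
    · simp [Set.indicator_of_notMem h]
  have hset : Set.Ioi (0:ℝ) ∩ Set.Iio R = Set.Ioo 0 R := rfl
  constructor
  · rw [integrable_fun_norm_addHaar, hfr, integrableOn_congr_fun key measurableSet_Ioi,
      integrableOn_indicator_iff measurableSet_Iio, Set.inter_comm, hset,
      ← intervalIntegrable_iff_integrableOn_Ioo_of_le hR.le]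
    exact intervalIntegral.intervalIntegrable_rpow' (by linarith)
  · rw [integral_fun_norm_addHaar, hfr, setIntegral_congr_fun measurableSet_Ioi key,
      setIntegral_indicator measurableSet_Iio, hset, ← integral_Ioc_eq_integral_Ioo,
      ← intervalIntegral.integral_of_le hR.le, integral_rpow (Or.inl (by linarith))]
    simp [Real.zero_rpow ha.ne']
    ring

theorem stmt_9 (N : ℕ) (hN : 1 ≤ N) (s k : ℝ)
    (hs : 0 < s) (hsN : s < N) (hk : 0 < k) (hkN : k < N) (hsk : s + k < N) :
    ∃ C : ℝ, 0 < C ∧ ∀ (r : ℝ), 1 ≤ r → ∀ y : EuclideanSpace ℝ (Fin N),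
      (∫ z in Metric.ball (0 : EuclideanSpace ℝ (Fin N)) r,
          ‖y - z‖ ^ (s - N) * (1 + ‖z‖) ^ (k - N))
        ≤ C * r ^ k * (1 + ‖y‖) ^ (s - N) := by
  haveI : Nonempty (Fin N) := ⟨⟨0, hN⟩⟩
  haveI : Nontrivial (EuclideanSpace ℝ (Fin N)) := inferInstance
  obtain ⟨A, hA, hAk⟩ := rad N hN k hk
  obtain ⟨B, hB, hBs⟩ := rad N hN s hs
  refine ⟨(1/4:ℝ) ^ (s - N) * A + (1/2:ℝ) ^ (k - N) * 4 ^ k * (B * (1/4) ^ s), by positivity, ?_⟩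
  intro r hr y
  have hr0 : 0 < r := by linarith
  have hw : 0 < 1 + ‖y‖ := by positivity
  set w := 1 + ‖y‖ with hwdef
  obtain ⟨i1, e1⟩ := hAk r hr0
  obtain ⟨i2, e2⟩ := hBs (w/4) (by positivity)
  have i2' := i2.comp_sub_left y
  have e2' := integral_sub_left_eq_self (fun x : EuclideanSpace ℝ (Fin N) =>
        (Set.Iio (w/4)).indicator (fun t : ℝ => t ^ (s - N)) ‖x‖) volume y
  rw [e2] at e2'
  set c1 := (1/4:ℝ) ^ (s - N) * w ^ (s - N) with hc1
  set c2 := (1/2:ℝ) ^ (k - N) * (4 * r) ^ k * w ^ (-N : ℝ) with hc2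
  have hc1p : 0 ≤ c1 := by positivity
  have hc2p : 0 ≤ c2 := by positivity
  rw [← integral_indicator measurableSet_ball]
  have hne : ∀ᵐ z : EuclideanSpace ℝ (Fin N), z ≠ 0 := by
    simp [ae_iff]
  refine (integral_mono_of_nonneg (Filter.Eventually.of_forall ?_)
    ((i1.const_mul c1).add (i2'.const_mul c2)) ?_).trans ?_
  · intro z
    refine Set.indicator_nonneg (fun z _ => ?_) z
    positivity
  · filter_upwards [hne] with z hz
    have hz0 : 0 < ‖z‖ := norm_pos_iff.2 hz
    have n1 : 0 ≤ (Set.Iio r).indicator (fun t : ℝ => t ^ (k - N)) ‖z‖ := by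
      rw [Set.indicator_apply]; split_ifs <;> positivity
    have n2 : 0 ≤ (Set.Iio (w/4)).indicator (fun t : ℝ => t ^ (s - N)) ‖y - z‖ := by
      rw [Set.indicator_apply]; split_ifs <;> positivity
    have m1 := mul_nonneg hc1p n1
    have m2 := mul_nonneg hc2p n2
    simp only [Pi.add_apply]
    by_cases h : z ∈ Metric.ball (0 : EuclideanSpace ℝ (Fin N)) r
    · rw [Set.indicator_of_mem h]
      have hzr : ‖z‖ < r := by simpa using h
      by_cases h2 : ‖y - z‖ < w/4
      · refine le_trans ?_ (le_add_of_nonneg_left m1)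
        rw [Set.indicator_of_mem (by exact h2), mul_comm]
        refine mul_le_mul_of_nonneg_right ?_ (by positivity)
        have t : ‖y‖ ≤ ‖y - z‖ + ‖z‖ := by simpa using norm_add_le (y - z) z
        have hw2 : 1/2 * w ≤ 1 + ‖z‖ := by linarith
        have hw4 : w ≤ 4 * r := by linarith
        calc (1 + ‖z‖) ^ (k - N) ≤ (1/2 * w) ^ (k - N) :=
              Real.rpow_le_rpow_of_nonpos (by positivity) hw2 (by linarith)
          _ = (1/2:ℝ) ^ (k - N) * w ^ k * w ^ (-N : ℝ) := by
              rw [Real.mul_rpow (by positivity) hw.le, mul_assoc, ← Real.rpow_add hw]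
              rfl
          _ ≤ c2 := by rw [hc2]; gcongr
      · refine le_trans ?_ (le_add_of_nonneg_right m2)
        rw [Set.indicator_of_mem (by exact hzr)]
        refine mul_le_mul ?_ ?_ (by positivity) hc1p
        · rw [hc1, ← Real.mul_rpow (by positivity) hw.le]
          exact Real.rpow_le_rpow_of_nonpos (by positivity) (by linarith) (by linarith)
        · exact Real.rpow_le_rpow_of_nonpos hz0 (by linarith) (by linarith)
    · rw [Set.indicator_of_notMem h]; positivity
  · simp only [Pi.add_apply]
    rw [integral_add (i1.const_mul c1) (i2'.const_mul c2), integral_const_mul, integral_const_mul,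
      e1, e2', hc1, hc2]
    apply le_of_eq
    have : w ^ (s - N) = w ^ s * w ^ (-N : ℝ) := by rw [← Real.rpow_add hw]; rfl
    rw [this, Real.mul_rpow (by positivity) hr0.le, show w / 4 = 1/4 * w by ring,
      Real.mul_rpow (by positivity) hw.le]
    ring
end

section
/- Let N ≥ 5 be an integer, γ_N = [N(N−4)²(N−2)(N+2)/2]^{−(N−4)/8}, and for ξ' ∈ ℝ^N, λ' > 0 let ũ₀(y) = γ_N (λ'/(λ'² + |y−ξ'|²))^{(N−4)/2}. Then for all i, j ∈ {1,…,N} and all y ∈ ℝ^N: ũ₀(y) · Σ_{k=1}^N (∂_i∂_j∂_k∂_k ũ₀)(y) = [N/((N−3)(N²−4N+8))] Σ_{k=1}^N (∂_i∂_j∂_k∂_k (ũ₀²))(y) + [(N²+4N)/(N²−4N+8)] (∂_i∂_j ũ₀)(y) · Σ_{k=1}^N (∂_k∂_k ũ₀)(y) + [4(N−4)²(N−2)N/(N²−4N+8)] ũ₀(y)² · |y−ξ'|² δ_{ij}/(λ'²+|y−ξ'|²)³ − [4(N−4)²(N²−2)/(N²−4N+8)] ũ₀(y)² · δ_{ij}/(λ'²+|y−ξ'|²)².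 -/
open scoped BigOperators

noncomputable section

/-- The shifted quadratic `λ² + |y - ξ|²`. -/
def Sq (N : ℕ) (ξ : EuclideanSpace ℝ (Fin N)) (l : ℝ) (y : EuclideanSpace ℝ (Fin N)) : ℝ :=
  l ^ 2 + ‖y - ξ‖ ^ 2

lemma Sq_pos (N : ℕ) (ξ : EuclideanSpace ℝ (Fin N)) (l : ℝ) (hl : 0 < l)
    (y : EuclideanSpace ℝ (Fin N)) : 0 < Sq N ξ l y := by
  unfold Sq; positivity

lemma Sq_contDiff (N : ℕ) (ξ : EuclideanSpace ℝ (Fin N)) (l : ℝ) (hl : 0 < l) (q : ℝ) :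
    ContDiff ℝ 2 (fun y => Sq N ξ l y ^ q) := by
  have h : ContDiff ℝ 2 (Sq N ξ l) := by
    unfold Sq
    exact contDiff_const.add ((contDiff_id.sub contDiff_const).norm_sq ℝ)
  exact h.rpow_const_of_ne (fun y => (Sq_pos N ξ l hl y).ne')

lemma pd_add (N : ℕ) (i : Fin N) (f g : EuclideanSpace ℝ (Fin N) → ℝ)
    (hf : Differentiable ℝ f) (hg : Differentiable ℝ g) :
    pd N i (fun y => f y + g y) = fun y => pd N i f y + pd N i g y := by
  funext y
  unfold pd
  rw [fderiv_fun_add (hf y) (hg y)]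
  rfl

lemma pd_sum (N : ℕ) (i : Fin N) (f : Fin N → EuclideanSpace ℝ (Fin N) → ℝ)
    (hf : ∀ k, Differentiable ℝ (f k)) :
    pd N i (fun y => ∑ k, f k y) = fun y => ∑ k, pd N i (f k) y := by
  funext y
  unfold pd
  rw [fderiv_fun_sum (fun k _ => hf k y)]
  simp

lemma pd_diff (N : ℕ) (i : Fin N) (f : EuclideanSpace ℝ (Fin N) → ℝ)
    (hf : ContDiff ℝ 2 f) : Differentiable ℝ (pd N i f) := by
  have h : ContDiff ℝ 1 (fderiv ℝ f) := hf.fderiv_right (by norm_num)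
  exact (h.differentiable (by norm_num)).clm_apply (differentiable_const _)

lemma Sq_hasFDerivAt (N : ℕ) (ξ : EuclideanSpace ℝ (Fin N)) (l : ℝ) (hl : 0 < l) (q : ℝ)
    (y : EuclideanSpace ℝ (Fin N)) :
    HasFDerivAt (fun y => Sq N ξ l y ^ q)
      ((q * Sq N ξ l y ^ (q - 1)) • (2 • innerSL ℝ (y - ξ))) y := by
  have h : HasFDerivAt (Sq N ξ l) (2 • innerSL ℝ (y - ξ)) y := by
    have := (((hasFDerivAt_id y).sub_const ξ).norm_sq).const_add (l ^ 2)
    exact this.congr_fderiv (by ext v; simp)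
  exact h.rpow_const (Or.inl (Sq_pos N ξ l hl y).ne')

lemma pd_pow (N : ℕ) (ξ : EuclideanSpace ℝ (Fin N)) (l : ℝ) (hl : 0 < l) (c q : ℝ)
    (k : Fin N) :
    pd N k (fun y => c * Sq N ξ l y ^ q)
      = fun y => (2 * c * q) * (y k - ξ k) * Sq N ξ l y ^ (q - 1) := by
  funext y
  unfold pd
  rw [((Sq_hasFDerivAt N ξ l hl q y).const_mul c).fderiv]
  simp [EuclideanSpace.inner_single_right]
  ring

lemma pd_coord_pow (N : ℕ) (ξ : EuclideanSpace ℝ (Fin N)) (l : ℝ) (hl : 0 < l) (c q : ℝ)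
    (i k : Fin N) :
    pd N i (fun y => c * (y k - ξ k) * Sq N ξ l y ^ q)
      = fun y => c * (if i = k then 1 else 0) * Sq N ξ l y ^ q
        + 2 * c * q * (y k - ξ k) * (y i - ξ i) * Sq N ξ l y ^ (q - 1) := by
  funext y
  unfold pd
  have h1 : HasFDerivAt (fun y : EuclideanSpace ℝ (Fin N) => c * (y k - ξ k))
      (c • (EuclideanSpace.proj k : EuclideanSpace ℝ (Fin N) →L[ℝ] ℝ)) y :=
    (((EuclideanSpace.proj k : EuclideanSpace ℝ (Fin N) →L[ℝ] ℝ).hasFDerivAt).sub_const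
      (ξ k)).const_mul c
  have h2 := h1.fun_mul (Sq_hasFDerivAt N ξ l hl q y)
  rw [h2.fderiv]
  simp [EuclideanSpace.inner_single_right, Pi.single_apply, eq_comm]
  ring

lemma pd_hess (N : ℕ) (ξ : EuclideanSpace ℝ (Fin N)) (l : ℝ) (hl : 0 < l) (c q : ℝ)
    (i j : Fin N) :
    pd N i (pd N j (fun y => c * Sq N ξ l y ^ q))
      = fun y => 2 * c * q * (if i = j then 1 else 0) * Sq N ξ l y ^ (q - 1)
        + 4 * c * q * (q - 1) * (y j - ξ j) * (y i - ξ i) * Sq N ξ l y ^ (q - 1 - 1) := by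
  rw [pd_pow N ξ l hl, pd_coord_pow N ξ l hl]
  funext y
  ring

lemma pd_lap (N : ℕ) (ξ : EuclideanSpace ℝ (Fin N)) (l : ℝ) (hl : 0 < l) (c q : ℝ)
    (y : EuclideanSpace ℝ (Fin N)) :
    ∑ k, pd N k (pd N k (fun y => c * Sq N ξ l y ^ q)) y
      = (2 * c * q * (N + 2 * q - 2)) * Sq N ξ l y ^ (q - 1)
        + (-4 * c * q * (q - 1) * l ^ 2) * Sq N ξ l y ^ (q - 1 - 1) := by
  simp only [pd_hess N ξ l hl, if_true]
  have hs : ∑ k, (y k - ξ k) * (y k - ξ k) = Sq N ξ l y - l ^ 2 := by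
    unfold Sq
    rw [EuclideanSpace.norm_sq_eq]
    simp [pow_two]
  have e : ∀ k : Fin N, 4 * c * q * (q - 1) * (y k - ξ k) * (y k - ξ k)
      * Sq N ξ l y ^ (q - 1 - 1) = (4 * c * q * (q - 1) * Sq N ξ l y ^ (q - 1 - 1)) *
      ((y k - ξ k) * (y k - ξ k)) := fun k => by ring
  simp only [e]
  rw [Finset.sum_add_distrib, ← Finset.mul_sum Finset.univ (fun k => (y k - ξ k) * (y k - ξ k)), hs]
  have hp := Sq_pos N ξ l hl y
  rw [Real.rpow_sub_one hp.ne' (q - 1)]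
  simp
  field_simp
  ring

lemma pd_lap_contDiff (N : ℕ) (ξ : EuclideanSpace ℝ (Fin N)) (l : ℝ) (hl : 0 < l) (c q : ℝ)
    (k : Fin N) : ContDiff ℝ 2 (pd N k (pd N k (fun y => c * Sq N ξ l y ^ q))) := by
  rw [pd_hess N ξ l hl]
  have h1 := Sq_contDiff N ξ l hl (q - 1)
  have h2 := Sq_contDiff N ξ l hl (q - 1 - 1)
  have h3 : ContDiff ℝ 2 (fun y : EuclideanSpace ℝ (Fin N) => y k - ξ k) :=
    (EuclideanSpace.proj k : EuclideanSpace ℝ (Fin N) →L[ℝ] ℝ).contDiff.sub contDiff_const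
  exact (contDiff_const.mul h1).add (((contDiff_const.mul h3).mul h3).mul h2)

lemma pd_hess_lap (N : ℕ) (ξ : EuclideanSpace ℝ (Fin N)) (l : ℝ) (hl : 0 < l) (c q : ℝ)
    (i j : Fin N) (y : EuclideanSpace ℝ (Fin N)) :
    ∑ k, pd N i (pd N j (pd N k (pd N k (fun y => c * Sq N ξ l y ^ q)))) y
      = pd N i (pd N j (fun y => (2 * c * q * (N + 2 * q - 2)) * Sq N ξ l y ^ (q - 1))) y
       + pd N i (pd N j
          (fun y => (-4 * c * q * (q - 1) * l ^ 2) * Sq N ξ l y ^ (q - 1 - 1))) y := by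
  have hc := pd_lap_contDiff N ξ l hl c q
  have h1 := pd_sum N j _ (fun k => (hc k).differentiable (by norm_num))
  have h2 := pd_sum N i _ (fun k => pd_diff N j _ (hc k))
  have h3 := congrFun h2 y
  rw [← h1] at h3
  simp only [pd_lap N ξ l hl] at h3
  rw [← h3]
  have d1 : ContDiff ℝ 2 (fun y => (2 * c * q * (N + 2 * q - 2)) * Sq N ξ l y ^ (q - 1)) :=
    contDiff_const.mul (Sq_contDiff N ξ l hl _)
  have d2 : ContDiff ℝ 2
      (fun y => (-4 * c * q * (q - 1) * l ^ 2) * Sq N ξ l y ^ (q - 1 - 1)) :=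
    contDiff_const.mul (Sq_contDiff N ξ l hl _)
  rw [pd_add N j _ _ (d1.differentiable (by norm_num)) (d2.differentiable (by norm_num)),
    pd_add N i _ _ (pd_diff N j _ d1) (pd_diff N j _ d2)]

theorem stmt_10 (N : ℕ) (hN : 5 ≤ N)
    (γ : ℝ)
    (hγ : γ = (((N : ℝ) * ((N : ℝ) - 4) ^ 2 * ((N : ℝ) - 2) * ((N : ℝ) + 2) / 2))
        ^ (-(((N : ℝ) - 4) / 8)))
    (ξ' : EuclideanSpace ℝ (Fin N)) (lam' : ℝ) (hlam' : 0 < lam')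
    (u₀ : EuclideanSpace ℝ (Fin N) → ℝ)
    (hu : ∀ y, u₀ y = γ * ((lam' / (lam' ^ 2 + ‖y - ξ'‖ ^ 2)) ^ (((N : ℝ) - 4) / 2))) :
    ∀ (i j : Fin N) (y : EuclideanSpace ℝ (Fin N)),
      u₀ y * ∑ k : Fin N, pd N i (pd N j (pd N k (pd N k u₀))) y
        = ((N : ℝ) / (((N : ℝ) - 3) * ((N : ℝ) ^ 2 - 4 * N + 8)))
            * ∑ k : Fin N, pd N i (pd N j (pd N k (pd N k (fun z => u₀ z ^ 2)))) y
          + (((N : ℝ) ^ 2 + 4 * N) / ((N : ℝ) ^ 2 - 4 * N + 8))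
            * pd N i (pd N j u₀) y * ∑ k : Fin N, pd N k (pd N k u₀) y
          + (4 * ((N : ℝ) - 4) ^ 2 * ((N : ℝ) - 2) * N / ((N : ℝ) ^ 2 - 4 * N + 8))
            * u₀ y ^ 2 * (‖y - ξ'‖ ^ 2 * (if i = j then (1 : ℝ) else 0)
                / (lam' ^ 2 + ‖y - ξ'‖ ^ 2) ^ 3)
          - (4 * ((N : ℝ) - 4) ^ 2 * ((N : ℝ) ^ 2 - 2) / ((N : ℝ) ^ 2 - 4 * N + 8))
            * u₀ y ^ 2 * ((if i = j then (1 : ℝ) else 0)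
                / (lam' ^ 2 + ‖y - ξ'‖ ^ 2) ^ 2) := by
  intro i j y
  obtain ⟨c, hc⟩ : ∃ c, c = γ * lam' ^ (((N : ℝ) - 4) / 2) := ⟨_, rfl⟩
  obtain ⟨p, hp⟩ : ∃ p, p = -(((N : ℝ) - 4) / 2) := ⟨_, rfl⟩
  have hu1 : u₀ = fun y => c * Sq N ξ' lam' y ^ p := by
    funext z
    have hz := Sq_pos N ξ' lam' hlam' z
    rw [hu, hc, hp, Real.rpow_neg hz.le]
    change γ * (lam' / Sq N ξ' lam' z) ^ _ = _
    rw [Real.div_rpow hlam'.le hz.le]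
    ring
  have hu2 : (fun z => u₀ z ^ 2) = fun y => c ^ 2 * Sq N ξ' lam' y ^ (p + p) := by
    funext z
    rw [hu1, Real.rpow_add (Sq_pos N ξ' lam' hlam' z)]
    ring
  rw [hu2, hu1, pd_hess_lap N ξ' lam' hlam', pd_hess_lap N ξ' lam' hlam',
    pd_lap N ξ' lam' hlam']
  simp only [pd_hess N ξ' lam' hlam']
  have hs := Sq_pos N ξ' lam' hlam' y
  have hn : ‖y - ξ'‖ ^ 2 = Sq N ξ' lam' y - lam' ^ 2 := by unfold Sq; ring
  rw [hn]
  simp only [Real.rpow_sub_one hs.ne', Real.rpow_add hs]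
  have e1 : lam' ^ 2 + (Sq N ξ' lam' y - lam' ^ 2) = Sq N ξ' lam' y := by ring
  rw [e1]
  generalize Sq N ξ' lam' y = s at *
  generalize s ^ p = T
  generalize (if i = j then (1 : ℝ) else 0) = d
  generalize y i - ξ' i = a
  generalize y j - ξ' j = b
  have hN' : (5 : ℝ) ≤ N := by exact_mod_cast hN
  generalize (N : ℝ) = n at *
  have h3 : n - 3 ≠ 0 := by linarith
  have hD : n ^ 2 - 4 * n + 8 ≠ 0 := by nlinarith
  have hs' := hs.ne'
  rw [hp]
  obtain ⟨D, hDD⟩ : ∃ D, D = n ^ 2 - 4 * n + 8 := ⟨_, rfl⟩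
  rw [← hDD] at hD ⊢
  field_simp
  rw [hDD]
  ring
end
end

section
/- For all i, j ∈ {1,…,N} and all y ∈ ℝ^N: Σ_{m=1}^N (∂_m∂_m H̄_{ij})(y) = [2(N+4) f'(|y|²) + 4|y|² f''(|y|²)] · H_{ij}(y). -/
open scoped BigOperators

noncomputable section

/-- `H̄_{ij}(y) = f(|y|²) H_{ij}(y)`. -/
def Hbar (N : ℕ) (W : Fin N → Fin N → Fin N → Fin N → ℝ) (f : ℝ → ℝ) (i j : Fin N)
    (y : EuclideanSpace ℝ (Fin N)) : ℝ :=
  f (‖y‖ ^ 2) * Hmat N W i j y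

lemma pd_mul_aux (N : ℕ) (m : Fin N) (a b : EuclideanSpace ℝ (Fin N) → ℝ)
    (ha : Differentiable ℝ a) (hb : Differentiable ℝ b) (y : EuclideanSpace ℝ (Fin N)) :
    pd N m (fun z => a z * b z) y = pd N m a y * b y + a y * pd N m b y := by
  unfold pd
  rw [fderiv_fun_mul (ha y) (hb y)]
  simp
  ring

lemma pd_add_aux (N : ℕ) (m : Fin N) (a b : EuclideanSpace ℝ (Fin N) → ℝ)
    (ha : Differentiable ℝ a) (hb : Differentiable ℝ b) (y : EuclideanSpace ℝ (Fin N)) :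
    pd N m (fun z => a z + b z) y = pd N m a y + pd N m b y := by
  unfold pd
  rw [fderiv_fun_add (ha y) (hb y)]
  simp

lemma pd_sum_aux (N : ℕ) (m : Fin N) (a : Fin N → EuclideanSpace ℝ (Fin N) → ℝ)
    (ha : ∀ p, Differentiable ℝ (a p)) (y : EuclideanSpace ℝ (Fin N)) :
    pd N m (fun z => ∑ p, a p z) y = ∑ p, pd N m (a p) y := by
  unfold pd
  rw [fderiv_fun_sum (fun p _ => ha p y)]
  simp

lemma coord_diff_aux (N : ℕ) (p : Fin N) :
    Differentiable ℝ (fun y : EuclideanSpace ℝ (Fin N) => y p) :=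
  (EuclideanSpace.proj p : EuclideanSpace ℝ (Fin N) →L[ℝ] ℝ).differentiable

lemma pd_coord_aux (N : ℕ) (m p : Fin N) (y : EuclideanSpace ℝ (Fin N)) :
    pd N m (fun z => z p) y = if p = m then 1 else 0 := by
  unfold pd
  have h := (EuclideanSpace.proj p : EuclideanSpace ℝ (Fin N) →L[ℝ] ℝ).hasFDerivAt (x := y)
  have h2 : fderiv ℝ (fun z : EuclideanSpace ℝ (Fin N) => z p) y = _ := h.fderiv
  rw [h2]
  simp [Pi.single_apply]

lemma pd_const_mul_aux (N : ℕ) (m : Fin N) (c : ℝ) (a : EuclideanSpace ℝ (Fin N) → ℝ)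
    (ha : Differentiable ℝ a) (y : EuclideanSpace ℝ (Fin N)) :
    pd N m (fun z => c * a z) y = c * pd N m a y := by
  unfold pd
  rw [fderiv_const_mul (ha y)]
  simp

lemma radial_diff_aux (N : ℕ) (g : ℝ → ℝ) (hg : Differentiable ℝ g) :
    Differentiable ℝ (fun y : EuclideanSpace ℝ (Fin N) => g (‖y‖ ^ 2)) :=
  hg.comp (differentiable_id.norm_sq ℝ)

lemma pd_radial_aux (N : ℕ) (m : Fin N) (g : ℝ → ℝ) (hg : Differentiable ℝ g)
    (y : EuclideanSpace ℝ (Fin N)) :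
    pd N m (fun z => g (‖z‖ ^ 2)) y = 2 * (y m * deriv g (‖y‖ ^ 2)) := by
  unfold pd
  have h1 : HasFDerivAt (fun z : EuclideanSpace ℝ (Fin N) => ‖z‖ ^ 2) _ y :=
    (hasStrictFDerivAt_norm_sq y).hasFDerivAt
  have h2 := (hg (‖y‖ ^ 2)).hasDerivAt.comp_hasFDerivAt y h1
  have h3 : fderiv ℝ (fun z : EuclideanSpace ℝ (Fin N) => g (‖z‖ ^ 2)) y = _ := h2.fderiv
  rw [h3]
  simp [EuclideanSpace.inner_single_right]
  ring

/-- first derivative of `Hmat` -/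
def Gaux (N : ℕ) (W : Fin N → Fin N → Fin N → Fin N → ℝ) (i j m : Fin N)
    (y : EuclideanSpace ℝ (Fin N)) : ℝ :=
  ∑ q : Fin N, (W i m j q + W i q j m) * y q

lemma Hmat_diff_aux (N : ℕ) (W : Fin N → Fin N → Fin N → Fin N → ℝ) (i j : Fin N) :
    Differentiable ℝ (Hmat N W i j) := by
  have hc := coord_diff_aux N
  unfold Hmat
  fun_prop

lemma Gaux_diff_aux (N : ℕ) (W : Fin N → Fin N → Fin N → Fin N → ℝ) (i j m : Fin N) :
    Differentiable ℝ (Gaux N W i j m) := by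
  have hc := coord_diff_aux N
  unfold Gaux
  fun_prop

lemma pd_Hmat_aux (N : ℕ) (W : Fin N → Fin N → Fin N → Fin N → ℝ) (i j m : Fin N)
    (y : EuclideanSpace ℝ (Fin N)) : pd N m (Hmat N W i j) y = Gaux N W i j m y := by
  have hc := coord_diff_aux N
  have e : Hmat N W i j = fun z => ∑ p, ∑ q, W i p j q * (z p * z q) := by
    funext z; simp only [Hmat, mul_assoc]
  rw [e, pd_sum_aux _ _ (fun p z => ∑ q, W i p j q * (z p * z q)) (fun p => by fun_prop)]
  have : ∀ p, pd N m (fun z => ∑ q, W i p j q * (z p * z q)) y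
      = ∑ q, W i p j q * ((if p = m then 1 else 0) * y q + y p * (if q = m then 1 else 0)) := by
    intro p
    rw [pd_sum_aux _ _ (fun q z => W i p j q * (z p * z q)) (fun q => by fun_prop)]
    refine Finset.sum_congr rfl fun q _ => ?_
    rw [pd_const_mul_aux _ _ _ (fun z => z p * z q) (by fun_prop),
      pd_mul_aux _ _ (fun z => z p) (fun z => z q) (hc p) (hc q), pd_coord_aux, pd_coord_aux]
  simp only [this, Gaux, mul_add, add_mul, Finset.sum_add_distrib]
  congr 1
  · rw [Finset.sum_comm]
    simp
  · simp

lemma pd_Gaux_aux (N : ℕ) (W : Fin N → Fin N → Fin N → Fin N → ℝ) (i j m : Fin N)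
    (y : EuclideanSpace ℝ (Fin N)) : pd N m (Gaux N W i j m) y = 2 * W i m j m := by
  have hc := coord_diff_aux N
  unfold Gaux
  rw [pd_sum_aux _ _ (fun q z => (W i m j q + W i q j m) * z q) (fun p => by fun_prop)]
  have : ∀ q, pd N m (fun z => (W i m j q + W i q j m) * z q) y
      = (W i m j q + W i q j m) * (if q = m then 1 else 0) := by
    intro q
    rw [pd_const_mul_aux _ _ _ (fun z => z q) (hc q), pd_coord_aux]
  simp [this]
  ring

lemma euler_aux (N : ℕ) (W : Fin N → Fin N → Fin N → Fin N → ℝ) (i j : Fin N)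
    (y : EuclideanSpace ℝ (Fin N)) : ∑ m, y m * Gaux N W i j m y = 2 * Hmat N W i j y := by
  have h1 : ∑ m, y m * Gaux N W i j m y
      = ∑ m, ∑ q, W i m j q * y m * y q + ∑ m, ∑ q, W i q j m * y q * y m := by
    simp only [Gaux, Finset.mul_sum, ← Finset.sum_add_distrib]
    refine Finset.sum_congr rfl fun m _ => Finset.sum_congr rfl fun q _ => ?_
    ring
  rw [h1, Finset.sum_comm (f := fun m q => W i q j m * y q * y m)]
  unfold Hmat
  ring

theorem stmt_11 (N : ℕ) (hN : 5 ≤ N)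
    (W : Fin N → Fin N → Fin N → Fin N → ℝ)
    (hW1 : ∀ i p j q, W i p j q = - W p i j q)
    (hW2 : ∀ i p j q, W i p j q = - W i p q j)
    (hW3 : ∀ i p j q, W i p j q = W j q i p)
    (hBianchi : ∀ i p j q, W i p j q + W i j q p + W i q p j = 0)
    (hTrace : ∀ p q, ∑ i : Fin N, W i p i q = 0)
    (f : ℝ → ℝ)
    (hf : ∃ P : Polynomial ℝ, P.degree ≤ 4 ∧ ∀ x, f x = P.eval x) :
    ∀ (i j : Fin N) (y : EuclideanSpace ℝ (Fin N)),
      ∑ m : Fin N, pd N m (pd N m (Hbar N W f i j)) y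
        = (2 * ((N : ℝ) + 4) * deriv f (‖y‖ ^ 2)
            + 4 * ‖y‖ ^ 2 * deriv (deriv f) (‖y‖ ^ 2)) * Hmat N W i j y := by
  intro i j y
  obtain ⟨P, -, hP⟩ := hf
  have hfe : f = fun x => P.eval x := funext hP
  have hd : deriv f = fun x => P.derivative.eval x := by
    rw [hfe]; funext x; exact P.deriv
  have hf1 : Differentiable ℝ f := by rw [hfe]; exact P.differentiable
  have hf2 : Differentiable ℝ (deriv f) := by rw [hd]; exact P.derivative.differentiable
  have hc := coord_diff_aux N
  have hH := Hmat_diff_aux N W i j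
  have hG := Gaux_diff_aux N W i j
  have hr1 := radial_diff_aux N f hf1
  have hr2 := radial_diff_aux N (deriv f) hf2
  have first : ∀ m, pd N m (Hbar N W f i j) = fun z =>
      2 * ((z m * deriv f (‖z‖ ^ 2)) * Hmat N W i j z) + f (‖z‖ ^ 2) * Gaux N W i j m z := by
    intro m
    funext z
    have := pd_mul_aux N m (fun z => f (‖z‖ ^ 2)) (Hmat N W i j) hr1 hH z
    rw [pd_radial_aux N m f hf1, pd_Hmat_aux] at this
    change pd N m (fun z => f (‖z‖ ^ 2) * Hmat N W i j z) z = _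
    rw [this]; ring
  have second : ∀ m, pd N m (pd N m (Hbar N W f i j)) y =
      2 * deriv f (‖y‖ ^ 2) * Hmat N W i j y
      + 4 * deriv (deriv f) (‖y‖ ^ 2) * Hmat N W i j y * (y m) ^ 2
      + 4 * deriv f (‖y‖ ^ 2) * (y m * Gaux N W i j m y)
      + 2 * f (‖y‖ ^ 2) * W i m j m := by
    intro m
    have d1 : Differentiable ℝ
        (fun z : EuclideanSpace ℝ (Fin N) => z m * deriv f (‖z‖ ^ 2)) := (hc m).mul hr2
    have d2 : Differentiable ℝ (fun z : EuclideanSpace ℝ (Fin N) =>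
      (z m * deriv f (‖z‖ ^ 2)) * Hmat N W i j z) := d1.mul hH
    have d3 : Differentiable ℝ (fun z : EuclideanSpace ℝ (Fin N) =>
      f (‖z‖ ^ 2) * Gaux N W i j m z) := hr1.mul (hG m)
    rw [first m, pd_add_aux N m _ _ (d2.const_mul 2) d3,
      pd_const_mul_aux N m 2 _ d2, pd_mul_aux N m _ _ d1 hH,
      pd_mul_aux N m (fun z => z m) _ (hc m) hr2,
      pd_mul_aux N m _ _ hr1 (hG m), pd_radial_aux N m f hf1,
      pd_radial_aux N m (deriv f) hf2, pd_coord_aux, pd_Hmat_aux, pd_Gaux_aux]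
    simp only [if_true]
    ring
  have tr : ∑ m, W i m j m = 0 := by
    rw [← hTrace i j]
    refine Finset.sum_congr rfl fun m _ => ?_
    rw [hW1 i m j m, hW2 m i j m, neg_neg]
  simp only [second, Finset.sum_add_distrib, ← Finset.mul_sum]
  rw [euler_aux, tr, ← EuclideanSpace.real_norm_sq_eq]
  simp only [Finset.sum_const, Finset.card_univ, Fintype.card_fin, nsmul_eq_mul]
  ring
end
end

section
/- For every ξ' ∈ ℝ^N, every λ' > 0 and every y ∈ ℝ^N, with u(y) = (λ'/(λ'² + |y−ξ'|²))^{(N−4)/2}, the following pointwise identity holds: Σ_{i,j,m,s=1}^N [ H̄_{ms}(y)(∂_s H̄_{ij})(y) − H̄_{si}(y)(∂_s H̄_{mj})(y) + H̄_{sj}(y)(∂_i H̄_{ms})(y) − H̄_{ms}(y)(∂_i H̄_{sj})(y) ] · ∂_m( (∂_i u)(∂_j u) )(y) = 0. -/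
open scoped BigOperators

noncomputable section

theorem aux_alg (N : ℕ) (h : Fin N → Fin N → ℝ) (d : Fin N → Fin N → Fin N → ℝ)
    (hs : ∀ i j, h i j = h j i) (ds : ∀ s i j, d s i j = d s j i)
    (div : ∀ j, ∑ i, d i i j = 0) (tr : ∀ s, ∑ j, d s j j = 0)
    (z : Fin N → ℝ) (b c : ℝ) :
    ∑ i, ∑ j, ∑ m, ∑ s, (h m s * d s i j - h s i * d s m j + h s j * d i m s - h m s * d i s j)
      * (c * z m * (z i * z j) + b * ((if i = m then 1 else 0) * z j + z i * (if j = m then 1 else 0))) = 0 := by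
  have A1 : ∑ i, ∑ j, ∑ m, ∑ s, (h m s * d s i j) * (z m * (z i * z j))
      = ∑ i, ∑ j, ∑ m, ∑ s, (h s i * d s m j) * (z m * (z i * z j)) := by
    rw [Finset.sum_comm]
    conv_rhs => rw [Finset.sum_comm]
    refine Finset.sum_congr rfl fun j _ => ?_
    rw [Finset.sum_comm]
    refine Finset.sum_congr rfl fun i _ => Finset.sum_congr rfl fun m _ =>
      Finset.sum_congr rfl fun s _ => ?_
    rw [hs i s]; ring
  have A2 : ∑ i, ∑ j, ∑ m, ∑ s, (h s j * d i m s) * (z m * (z i * z j))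
      = ∑ i, ∑ j, ∑ m, ∑ s, (h m s * d i s j) * (z m * (z i * z j)) := by
    refine Finset.sum_congr rfl fun i _ => ?_
    rw [Finset.sum_comm]
    refine Finset.sum_congr rfl fun j _ => Finset.sum_congr rfl fun m _ =>
      Finset.sum_congr rfl fun s _ => ?_
    rw [hs s m, ds i j s]; ring
  have B : ∑ i, ∑ j, ∑ m, ∑ s, (h m s * d s i j - h s i * d s m j + h s j * d i m s - h m s * d i s j)
      * ((if i = m then 1 else 0) * z j) = - ∑ i, ∑ j, ∑ s, h i s * d i s j * z j := by
    have e : ∀ i j, ∑ m, ∑ s, (h m s * d s i j - h s i * d s m j + h s j * d i m s - h m s * d i s j)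
      * ((if i = m then 1 else 0) * z j) = ∑ s, h s j * d i i s * z j - ∑ s, h i s * d i s j * z j := by
      intro i j
      rw [Finset.sum_eq_single i]
      · rw [← Finset.sum_sub_distrib]
        refine Finset.sum_congr rfl fun s _ => ?_
        rw [hs s i]; simp; ring
      · intro m _ hm
        simp [Ne.symm hm]
      · simp
    simp only [e, Finset.sum_sub_distrib]
    have : ∑ i, ∑ j, ∑ s, h s j * d i i s * z j = 0 := by
      rw [Finset.sum_comm]
      refine Finset.sum_eq_zero fun j _ => ?_
      rw [Finset.sum_comm]
      refine Finset.sum_eq_zero fun s _ => ?_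
      have := div s
      rw [← Finset.sum_mul, ← Finset.mul_sum, this]; simp
    rw [this]; simp
  have C : ∑ i, ∑ j, ∑ m, ∑ s, (h m s * d s i j - h s i * d s m j + h s j * d i m s - h m s * d i s j)
      * (z i * (if j = m then 1 else 0)) = ∑ i, ∑ j, ∑ s, h i s * d i s j * z j := by
    have e : ∀ i j, ∑ m, ∑ s, (h m s * d s i j - h s i * d s m j + h s j * d i m s - h m s * d i s j)
      * (z i * (if j = m then 1 else 0)) = ∑ s, h j s * d s i j * z i - ∑ s, h s i * d s j j * z i := by
      intro i j
      rw [Finset.sum_eq_single j]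
      · rw [← Finset.sum_sub_distrib]
        refine Finset.sum_congr rfl fun s _ => ?_
        rw [hs s j, ds i s j]; simp; ring
      · intro m _ hm
        simp [Ne.symm hm]
      · simp
    simp only [e, Finset.sum_sub_distrib]
    have : ∑ i, ∑ j, ∑ s, h s i * d s j j * z i = 0 := by
      refine Finset.sum_eq_zero fun i _ => ?_
      rw [Finset.sum_comm]
      refine Finset.sum_eq_zero fun s _ => ?_
      rw [← Finset.sum_mul, ← Finset.mul_sum, tr s]; simp
    rw [this, sub_zero]
    -- Σ_i Σ_j Σ_s h j s d s i j z i
    have e2 : ∀ i : Fin N, ∑ j, ∑ s, h i s * d i s j * z j = ∑ j, ∑ s, h i s * d i s j * z j := fun _ => rfl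
    rw [Finset.sum_comm (f := fun i j => ∑ s, h i s * d i s j * z j)]
    refine Finset.sum_congr rfl fun i _ => ?_
    rw [Finset.sum_comm]
    refine Finset.sum_congr rfl fun s _ => Finset.sum_congr rfl fun j _ => ?_
    rw [hs j s, ds s i j]
  have key : ∑ i, ∑ j, ∑ m, ∑ s, (h m s * d s i j - h s i * d s m j + h s j * d i m s - h m s * d i s j)
      * (c * z m * (z i * z j) + b * ((if i = m then 1 else 0) * z j + z i * (if j = m then 1 else 0)))
      = c * (∑ i, ∑ j, ∑ m, ∑ s, (h m s * d s i j) * (z m * (z i * z j))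
        - ∑ i, ∑ j, ∑ m, ∑ s, (h s i * d s m j) * (z m * (z i * z j))
        + ∑ i, ∑ j, ∑ m, ∑ s, (h s j * d i m s) * (z m * (z i * z j))
        - ∑ i, ∑ j, ∑ m, ∑ s, (h m s * d i s j) * (z m * (z i * z j)))
        + b * (∑ i, ∑ j, ∑ m, ∑ s, (h m s * d s i j - h s i * d s m j + h s j * d i m s - h m s * d i s j)
      * ((if i = m then 1 else 0) * z j)
      + ∑ i, ∑ j, ∑ m, ∑ s, (h m s * d s i j - h s i * d s m j + h s j * d i m s - h m s * d i s j)
      * (z i * (if j = m then 1 else 0))) := by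
    simp only [← Finset.sum_add_distrib, ← Finset.sum_sub_distrib, Finset.mul_sum]
    refine Finset.sum_congr rfl fun i _ => Finset.sum_congr rfl fun j _ =>
      Finset.sum_congr rfl fun m _ => Finset.sum_congr rfl fun s _ => ?_
    ring
  rw [key, A1, A2, B, C]; ring

theorem aux_coord (N : ℕ) (p : Fin N) (x y : EuclideanSpace ℝ (Fin N)) :
    HasFDerivAt (fun z : EuclideanSpace ℝ (Fin N) => (z - x) p)
      (EuclideanSpace.proj p : EuclideanSpace ℝ (Fin N) →L[ℝ] ℝ) y := by
  have h := (EuclideanSpace.proj p : EuclideanSpace ℝ (Fin N) →L[ℝ] ℝ).hasFDerivAt (x := y)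
  have := h.sub_const (x p)
  exact this

/-- derivative of a radial function -/
theorem aux_radial_s13 (N : ℕ) (g : ℝ → ℝ) (g' : ℝ) (x y : EuclideanSpace ℝ (Fin N))
    (hg : HasDerivAt g g' (‖y - x‖ ^ 2)) :
    HasFDerivAt (fun z : EuclideanSpace ℝ (Fin N) => g (‖z - x‖ ^ 2))
      (g' • ((2 : ℝ) • innerSL ℝ (y - x))) y := by
  have h1 : HasFDerivAt (fun z : EuclideanSpace ℝ (Fin N) => ‖z - x‖ ^ 2)
      ((2 : ℝ) • innerSL ℝ (y - x)) y := by
    have := (((hasFDerivAt_id y).sub_const x).norm_sq)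
    refine HasFDerivAt.congr_fderiv this ?_
    ext v; simp
  exact hg.comp_hasFDerivAt y h1

theorem aux_inner (N : ℕ) (v : EuclideanSpace ℝ (Fin N)) (s : Fin N) :
    innerSL ℝ v (EuclideanSpace.single s (1:ℝ)) = v s := by
  simp [EuclideanSpace.inner_single_right]

theorem aux_proj (N : ℕ) (i s : Fin N) :
    (EuclideanSpace.proj i : EuclideanSpace ℝ (Fin N) →L[ℝ] ℝ) (EuclideanSpace.single s (1:ℝ))
      = if i = s then 1 else 0 := by
  simp [Pi.single_apply]

theorem aux_pdH (N : ℕ) (W : Fin N → Fin N → Fin N → Fin N → ℝ) (P : Polynomial ℝ)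
    (s i j : Fin N) (y : EuclideanSpace ℝ (Fin N)) :
    pd N s (Hbar N W (fun x => P.eval x) i j) y
      = 2 * P.derivative.eval (‖y‖ ^ 2) * (y s * Hmat N W i j y)
        + P.eval (‖y‖ ^ 2) * ∑ p, ∑ q, W i p j q *
          ((if p = s then 1 else 0) * y q + y p * (if q = s then 1 else 0)) := by
  have h1 := aux_radial_s13 N (fun x => P.eval x) _ 0 y (P.hasDerivAt _)
  simp only [sub_zero] at h1
  have hc : ∀ p : Fin N, HasFDerivAt (fun z : EuclideanSpace ℝ (Fin N) => z p)
      (EuclideanSpace.proj p : EuclideanSpace ℝ (Fin N) →L[ℝ] ℝ) y := by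
    intro p
    simpa using aux_coord N p 0 y
  have h2 : HasFDerivAt (Hmat N W i j) (∑ p, ∑ q, W i p j q •
      (y p • (EuclideanSpace.proj q : EuclideanSpace ℝ (Fin N) →L[ℝ] ℝ) + y q • EuclideanSpace.proj p)) y := by
    have : Hmat N W i j = fun z => ∑ p, ∑ q, W i p j q * (z p * z q) := by
      funext z; simp [Hmat, mul_assoc]
    rw [this]
    refine HasFDerivAt.fun_sum fun p _ => HasFDerivAt.fun_sum fun q _ => ?_
    exact ((hc p).mul (hc q)).const_mul _
  have h3 := h1.mul h2
  unfold pd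
  refine (congrArg (fun L => L (EuclideanSpace.single s (1:ℝ))) h3.fderiv).trans ?_
  simp only [add_apply, smul_apply,
    ContinuousLinearMap.sum_apply, aux_inner, smul_eq_mul, aux_proj]
  have : ∀ p q : Fin N, y p * (if q = s then (1:ℝ) else 0) + y q * (if p = s then 1 else 0)
    = (if p = s then 1 else 0) * y q + y p * (if q = s then 1 else 0) := by intros; ring
  simp only [this]
  ring

theorem aux_pdu (N : ℕ) (ξ : EuclideanSpace ℝ (Fin N)) (l e : ℝ) (hl : 0 < l)
    (u : EuclideanSpace ℝ (Fin N) → ℝ)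
    (hu : ∀ y, u y = (l / (l ^ 2 + ‖y - ξ‖ ^ 2)) ^ e) (y : EuclideanSpace ℝ (Fin N)) :
    ∃ b c : ℝ, ∀ i j m, pd N m (fun z => pd N i u z * pd N j u z) y
      = c * (y - ξ) m * ((y - ξ) i * (y - ξ) j) +
        b * ((if i = m then 1 else 0) * (y - ξ) j + (y - ξ) i * (if j = m then 1 else 0)) := by
  set G : ℝ → ℝ := fun t => (-l / (l ^ 2 + t) ^ 2) * e * (l / (l ^ 2 + t)) ^ (e - 1) with hG
  have hg : ∀ t : ℝ, 0 ≤ t → HasDerivAt (fun t => (l / (l ^ 2 + t)) ^ e) (G t) t := by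
    intro t ht
    have hp : 0 < l ^ 2 + t := by positivity
    have h1 : HasDerivAt (fun t => l / (l ^ 2 + t)) (-l / (l ^ 2 + t) ^ 2) t := by
      have := ((hasDerivAt_const t l).div ((hasDerivAt_id t).const_add (l ^ 2)) hp.ne')
      exact HasDerivAt.congr_deriv this (by simp)
    exact h1.rpow_const (Or.inl (by positivity))
  have hpd : ∀ i z, pd N i u z = 2 * G (‖z - ξ‖ ^ 2) * (z - ξ) i := by
    intro i z
    have h := aux_radial_s13 N _ _ ξ z (hg (‖z - ξ‖ ^ 2) (by positivity))
    have hu' : u = fun z => (l / (l ^ 2 + ‖z - ξ‖ ^ 2)) ^ e := funext hu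
    unfold pd
    rw [hu', h.fderiv]
    simp only [smul_apply, aux_inner, smul_eq_mul]
    ring
  set B : ℝ → ℝ := fun t => 4 * G t ^ 2 with hB
  have hBd : ∀ t : ℝ, 0 ≤ t → DifferentiableAt ℝ B t := by
    intro t ht
    have hp : 0 < l ^ 2 + t := by positivity
    have h0 : l ^ 2 + t ≠ 0 := hp.ne'
    have h1 : DifferentiableAt ℝ (fun t => l / (l ^ 2 + t)) t := by
      fun_prop (disch := assumption)
    have h2 : DifferentiableAt ℝ (fun t => (l / (l ^ 2 + t)) ^ (e - 1)) t :=
      h1.rpow_const (Or.inl (by positivity))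
    have h3 : DifferentiableAt ℝ (fun t => -l / (l ^ 2 + t) ^ 2) t := by
      have : (l ^ 2 + t) ^ 2 ≠ 0 := pow_ne_zero 2 h0
      fun_prop (disch := assumption)
    exact (((h3.mul_const e).mul h2).pow 2).const_mul 4
  refine ⟨B (‖y - ξ‖ ^ 2), 2 * deriv B (‖y - ξ‖ ^ 2), fun i j m => ?_⟩
  have hf : (fun z => pd N i u z * pd N j u z)
      = fun z => B (‖z - ξ‖ ^ 2) * ((z - ξ) i * (z - ξ) j) := by
    funext z; rw [hpd, hpd, hB]; ring
  rw [hf]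
  have h1 := aux_radial_s13 N B _ ξ y (hBd (‖y - ξ‖ ^ 2) (by positivity)).hasDerivAt
  have h3 := h1.mul ((aux_coord N i ξ y).mul (aux_coord N j ξ y))
  unfold pd
  refine (congrArg (fun L => L (EuclideanSpace.single m (1:ℝ))) h3.fderiv).trans ?_
  simp only [add_apply, smul_apply,
    aux_inner, smul_eq_mul, aux_proj, Pi.mul_apply]
  ring

theorem stmt_13 (N : ℕ) (hN : 5 ≤ N)
    (W : Fin N → Fin N → Fin N → Fin N → ℝ)
    (hW1 : ∀ i p j q, W i p j q = - W p i j q)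
    (hW2 : ∀ i p j q, W i p j q = - W i p q j)
    (hW3 : ∀ i p j q, W i p j q = W j q i p)
    (hBianchi : ∀ i p j q, W i p j q + W i j q p + W i q p j = 0)
    (hTrace : ∀ p q, ∑ i : Fin N, W i p i q = 0)
    (f : ℝ → ℝ)
    (hf : ∃ P : Polynomial ℝ, P.degree ≤ 4 ∧ ∀ x, f x = P.eval x)
    (ξ' : EuclideanSpace ℝ (Fin N)) (lam' : ℝ) (hlam' : 0 < lam')
    (u : EuclideanSpace ℝ (Fin N) → ℝ)
    (hu : ∀ y, u y = (lam' / (lam' ^ 2 + ‖y - ξ'‖ ^ 2)) ^ (((N : ℝ) - 4) / 2)) :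
    ∀ y : EuclideanSpace ℝ (Fin N),
      ∑ i : Fin N, ∑ j : Fin N, ∑ m : Fin N, ∑ s : Fin N,
        (Hbar N W f m s y * pd N s (Hbar N W f i j) y
          - Hbar N W f s i y * pd N s (Hbar N W f m j) y
          + Hbar N W f s j y * pd N i (Hbar N W f m s) y
          - Hbar N W f m s y * pd N i (Hbar N W f s j) y)
        * pd N m (fun z => pd N i u z * pd N j u z) y = 0 := by
  intro y
  obtain ⟨P, -, hP⟩ := hf
  obtain rfl : f = fun x => P.eval x := funext hP
  obtain ⟨b, c, hbc⟩ := aux_pdu N ξ' lam' _ hlam' u hu y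
  simp only [hbc]
  have hHs : ∀ i j, Hmat N W i j = Hmat N W j i := by
    intro i j
    funext z
    unfold Hmat
    rw [Finset.sum_comm]
    refine Finset.sum_congr rfl fun p _ => Finset.sum_congr rfl fun q _ => ?_
    rw [hW3 i q j p]; ring
  have hbs : ∀ i j, Hbar N W (fun x => P.eval x) i j = Hbar N W (fun x => P.eval x) j i := by
    intro i j
    funext z
    unfold Hbar
    rw [hHs]
  have hz : ∀ i p q, W i i p q = 0 := fun i p q => by linarith [hW1 i i p q]
  refine aux_alg N (fun i j => Hbar N W (fun x => P.eval x) i j y)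
    (fun s i j => pd N s (Hbar N W (fun x => P.eval x) i j) y)
    (fun i j => congrFun (hbs i j) y) (fun s i j => by simp only [hbs i j]) ?_ ?_
    (fun i => (y - ξ') i) b c
  · intro j
    simp only [aux_pdH, Finset.sum_add_distrib, ← Finset.mul_sum]
    have e1 : ∑ i, y i * Hmat N W i j y = 0 := by
      have : ∑ i, y i * Hmat N W i j y = - ∑ i, y i * Hmat N W i j y := by
        conv_lhs => simp only [Hmat, Finset.mul_sum]
        rw [Finset.sum_comm]
        simp only [Hmat, Finset.mul_sum, ← Finset.sum_neg_distrib]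
        refine Finset.sum_congr rfl fun p _ => Finset.sum_congr rfl fun i _ =>
          Finset.sum_congr rfl fun q _ => ?_
        rw [hW1 i p j q]; ring
      linarith
    have e2 : ∑ i, ∑ p, ∑ q, W i p j q *
          ((if p = i then 1 else 0) * y q + y p * (if q = i then 1 else 0)) = 0 := by
      have : ∀ i, ∑ p, ∑ q, W i p j q *
          ((if p = i then 1 else 0) * y q + y p * (if q = i then 1 else 0))
          = ∑ p, W i p j i * y p := by
        intro i
        refine Finset.sum_congr rfl fun p _ => ?_
        rw [Finset.sum_eq_single_of_mem i (Finset.mem_univ i)]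
        · by_cases hp : p = i
          · subst hp; simp [hz]
          · simp [hp]
        · intro q _ hq
          by_cases hp : p = i
          · subst hp; simp [hz]
          · simp [hp, hq]
      simp only [this]
      rw [Finset.sum_comm]
      refine Finset.sum_eq_zero fun p _ => ?_
      rw [← Finset.sum_mul]
      have : ∑ i, W i p j i = - ∑ i, W i p i j := by
        rw [← Finset.sum_neg_distrib]
        exact Finset.sum_congr rfl fun i _ => hW2 i p j i
      rw [this, hTrace]; simp
    simp only [mul_add] at e2 ⊢
    simp only [Finset.sum_add_distrib] at e2 ⊢
    rw [e1]
    linear_combination (P.eval (‖y‖ ^ 2)) * e2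
  · intro s
    simp only [aux_pdH, Finset.sum_add_distrib, ← Finset.mul_sum]
    have e1 : ∑ j, Hmat N W j j y = 0 := by
      unfold Hmat
      rw [Finset.sum_comm]
      refine Finset.sum_eq_zero fun p _ => ?_
      rw [Finset.sum_comm]
      refine Finset.sum_eq_zero fun q _ => ?_
      rw [← Finset.sum_mul, ← Finset.sum_mul, hTrace]; simp
    have e2 : ∑ j, ∑ p, ∑ q, W j p j q *
          ((if p = s then 1 else 0) * y q + y p * (if q = s then 1 else 0)) = 0 := by
      rw [Finset.sum_comm]
      refine Finset.sum_eq_zero fun p _ => ?_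
      rw [Finset.sum_comm]
      refine Finset.sum_eq_zero fun q _ => ?_
      rw [← Finset.sum_mul, hTrace]; simp
    rw [e1, e2]; simp
end
end
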